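/- There exists ε > 0 such that for every real q ∈ (1/2-ε, 1/2), writing t = 1-2q, a = a(q), v = v(q), γ = γ(q), the following identities hold: PA(q) = D(q) - q² A(q) · ( (a;q)_∞ (v;q)_∞ / ((q;q)_∞ (av;q)_∞) ) · T(q), and T(q) = (1-2q)^{-γ} · Π( log(1-2q)/log(1/q) ) · U(q) + V(q), where Π(w) = ∑_{k∈ℤ} p_k e^{-2πikw} with p_k = π / sin(πγ + 2ikπ²/log(1/q)), U(q) = (v q^{3γ-2}/log(1/q)) · (-q^{-1}t;q)_∞ / (-a q^{-2}t;q)_∞, and V(q) = -((q;q)_∞/(a;q)_∞) · q^{-2}/(1+q^{-2}t) + q^{-2} ( (q;q)_∞ (av;q)_∞ / ((a;q)_∞ (v;q)_∞) ) · ∑_{r=0}^∞ [ (a^{-1}v^{-1}q;q)_r / (v^{-1}q;q)_r ] (-a q^{-2} t)^r. -/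

import Mathlib

open Complex Filter Asymptotics Topology

noncomputable section

/-- finite q-Pochhammer symbol `(x;q)_n` -/
def qPF (x q : ℂ) (n : ℕ) : ℂ := ∏ i ∈ Finset.range n, (1 - x * q ^ i)

/-- infinite q-Pochhammer symbol `(x;q)_∞` -/
def qPI (x q : ℂ) : ℂ := ∏' i : ℕ, (1 - x * q ^ i)

def uF (q : ℂ) : ℂ := q / (1 - q)
def vF (q : ℂ) : ℂ := (1 - q + q ^ 2) / (1 - q)
def aF (q : ℂ) : ℂ := q ^ 2 / (1 - q + q ^ 2)
def AF (q : ℂ) : ℂ := 2 * q * (1 - q) ^ 2 / (1 - 2 * q) ^ 2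
def CF (q : ℂ) : ℂ := 2 * q * (3 - 10 * q + 9 * q ^ 2 - q ^ 3) / ((1 - q) * (1 - 2 * q) ^ 2)
def DF (q : ℂ) : ℂ := CF q - (q ^ 2 / (1 - q) ^ 2) * AF q * qPI (vF q) q / qPI (aF q * vF q) q

/-- the `m`-th term (for `m ≥ 1`) of the explicit series for `PA(q)` -/
def PAterm (q : ℂ) (m : ℕ) : ℂ :=
  (-1) ^ m * q ^ (2 * m) / ((1 - 2 * q) ^ m * (1 - q - q ^ (m + 1))) *
    ∏ k ∈ Finset.Icc 1 (m - 1),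
      ((1 - q - q ^ k + q ^ (k + 1) - q ^ (k + 2)) / (1 - q - q ^ (k + 1)))

/-- the explicit convergent series defining `PA(q)` for small `q` -/
def PAseries (q : ℂ) : ℂ :=
  (-2 * q ^ 3 * (1 - q) ^ 2 / (1 - 2 * q) ^ 2) * (∑' m : ℕ, PAterm q (m + 1))
    + 2 * q * (3 - 10 * q + 9 * q ^ 2 - q ^ 3) / ((1 - 2 * q) ^ 2 * (1 - q))

/-- the `(ν,j)` term (for `ν ≥ 1`, `j ≥ 0`) of the double sum `T(q)` -/
def Tterm (q : ℂ) (ν j : ℕ) : ℂ :=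
  (qPF (aF q * q ^ (-(j : ℤ))) q j / qPF (q ^ (-(j : ℤ))) q j) *
    (vF q ^ ν * q ^ ((j + 1) * ν) / (1 - 2 * q + q ^ (ν + 2)))

/-- real version of `v(q)` -/
def vR (q : ℝ) : ℝ := (1 - q + q ^ 2) / (1 - q)

/-- real version of `a(q)` -/
def aR (q : ℝ) : ℝ := q ^ 2 / (1 - q + q ^ 2)

/-- `γ(q) = log v(q) / log(1/q)` -/
def gammaR (q : ℝ) : ℝ := Real.log (vR q) / Real.log (1 / q)

/-- the Fourier coefficient `p_k = π / sin(πγ + 2ikπ²/log(1/q))` -/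
def pcoefR (q : ℝ) (k : ℤ) : ℂ :=
  (Real.pi : ℂ) / Complex.sin ((Real.pi : ℂ) * (gammaR q : ℂ) +
    2 * Complex.I * (k : ℂ) * (Real.pi : ℂ) ^ 2 / (Real.log (1 / q) : ℂ))

/-- the Fourier series `Π(w) = ∑_{k∈ℤ} p_k e^{-2πikw}` -/
def PiR (q : ℝ) (w : ℝ) : ℂ :=
  ∑' k : ℤ, pcoefR q k * Complex.exp (-2 * (Real.pi : ℂ) * Complex.I * (k : ℂ) * (w : ℂ))

/-- the singular series `U(q) = (v q^{3γ-2}/log(1/q)) (-q⁻¹t;q)_∞/(-a q⁻²t;q)_∞`,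
with `t = 1-2q` -/
def Ufun (q : ℝ) : ℂ :=
  ((vR q * q ^ (3 * gammaR q - 2) / Real.log (1 / q) : ℝ) : ℂ) *
    (qPI (-(((1 - 2 * q) / q : ℝ) : ℂ)) (q : ℂ) /
      qPI (-((aR q * (1 - 2 * q) / q ^ 2 : ℝ) : ℂ)) (q : ℂ))

/-- the `r`-th term of the series in the regular series `V(q)` -/
def Vterm (q : ℝ) (r : ℕ) : ℂ :=
  (qPF ((aF q)⁻¹ * (vF q)⁻¹ * q) (q : ℂ) r / qPF ((vF q)⁻¹ * q) (q : ℂ) r) *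
    (-(aF q) * (1 - 2 * (q : ℂ)) / (q : ℂ) ^ 2) ^ r

/-- the regular series `V(q)` -/
def Vfun (q : ℝ) : ℂ :=
  -(qPI (q : ℂ) (q : ℂ) / qPI (aF q) (q : ℂ)) *
      ((1 / (q : ℂ) ^ 2) / (1 + (1 - 2 * (q : ℂ)) / (q : ℂ) ^ 2)) +
    (1 / (q : ℂ) ^ 2) *
      (qPI (q : ℂ) (q : ℂ) * qPI (aF q * vF q) (q : ℂ) /
        (qPI (aF q) (q : ℂ) * qPI (vF q) (q : ℂ))) *
      ∑' r : ℕ, Vterm q r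

/-!
The `q`-binomial theorem and Heine's transformation turn the series defining `PA` into
`∑ₙ (a;q)ₙ / (q;q)ₙ (v q)ⁿ / (1 - 2q + qⁿ⁺²)`, which converges on the whole disc
`‖q‖ < 1 / 2`, where no denominator vanishes. Up to a factor, the inner sum of `T` is the general
term of this series, so that `T` is the series without its first term.

With `z = q⁻² (1 - 2q)` the series is `q⁻² F(z)` for
`F(z) = ∑ₙ (a;q)ₙ / (q;q)ₙ (v q)ⁿ / (z + qⁿ)`, a solution of a first-order inhomogeneous
`q`-difference equation. Subtracting the solution regular at `z = 0` leaves a solution of the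
homogeneous equation, determined by its behaviour along `z qᴺ` as `N → ∞`; there `F` is governed by
the bilateral series `∑ₖ (v q)ᵏ / (z + qᵏ)` over `k ∈ ℤ`. Since `v = q^(-γ)`, the latter is
`z^(-γ)` times a periodic function of `log z / log (1 / q)`, whose Fourier coefficients are given by
Poisson summation and Euler's integral `B(u, 1 - u) = π / sin (π u)`.
-/

section Pochhammer

variable {b c q : ℂ}

lemma qPF_zero (x q : ℂ) : qPF x q 0 = 1 := by simp [qPF]

lemma qPF_succ (x q : ℂ) (n : ℕ) : qPF x q (n + 1) = qPF x q n * (1 - x * q ^ n) :=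
  Finset.prod_range_succ _ n

lemma qPF_succ' (x q : ℂ) (n : ℕ) : qPF x q (n + 1) = (1 - x) * qPF (x * q) q n := by
  simp only [qPF, Finset.prod_range_succ', pow_zero, mul_one, pow_succ', mul_assoc]
  rw [mul_comm]

lemma norm_mul_pow_lt_one {𝕜 : Type*} [NormedDivisionRing 𝕜] {x y : 𝕜} (hy : ‖y‖ < 1)
    (hx : ‖x‖ < 1) (n : ℕ) : ‖x * y ^ n‖ < 1 := by
  rw [norm_mul, norm_pow]
  exact (mul_le_of_le_one_right (norm_nonneg x) (pow_le_one₀ (norm_nonneg y) hy.le)).trans_lt hx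

lemma one_sub_mul_pow_ne_zero (hq : ‖q‖ < 1) (hc : ‖c‖ < 1) (n : ℕ) : 1 - c * q ^ n ≠ 0 :=
  (isUnit_one_sub_of_norm_lt_one (norm_mul_pow_lt_one hq hc n)).ne_zero

lemma qPF_ne_zero (hq : ‖q‖ < 1) (hc : ‖c‖ < 1) (n : ℕ) : qPF c q n ≠ 0 :=
  Finset.prod_ne_zero_iff.mpr fun i _ => one_sub_mul_pow_ne_zero hq hc i

lemma summable_norm_neg_mul_pow (hq : ‖q‖ < 1) (x : ℂ) :
    Summable fun n : ℕ => ‖-(x * q ^ n)‖ := by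
  simp only [norm_neg, norm_mul, norm_pow]
  exact (summable_geometric_of_lt_one (norm_nonneg q) hq).mul_left _

lemma multipliable_one_sub_mul_pow (hq : ‖q‖ < 1) (x : ℂ) :
    Multipliable fun n : ℕ => 1 - x * q ^ n := by
  simpa only [sub_eq_add_neg] using
    multipliable_one_add_of_summable (summable_norm_neg_mul_pow hq x)

lemma tendsto_qPF (hq : ‖q‖ < 1) (x : ℂ) : Tendsto (qPF x q) atTop (𝓝 (qPI x q)) :=
  (multipliable_one_sub_mul_pow hq x).hasProd.tendsto_prod_nat

lemma qPI_ne_zero_of_forall {x : ℂ} (hq : ‖q‖ < 1) (hx : ∀ n : ℕ, 1 - x * q ^ n ≠ 0) :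
    qPI x q ≠ 0 := by
  simp only [sub_eq_add_neg] at hx
  simpa only [qPI, sub_eq_add_neg] using
    tprod_one_add_ne_zero_of_summable hx (summable_norm_neg_mul_pow hq x)

lemma qPI_ne_zero (hq : ‖q‖ < 1) (hc : ‖c‖ < 1) : qPI c q ≠ 0 :=
  qPI_ne_zero_of_forall hq (one_sub_mul_pow_ne_zero hq hc)

lemma qPF_mul_qPI (hq : ‖q‖ < 1) (x : ℂ) (n : ℕ) :
    qPF x q n * qPI (x * q ^ n) q = qPI x q := by
  have hshift (i : ℕ) : 1 - x * q ^ n * q ^ i = 1 - x * q ^ (i + n) := by ring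
  have hmul := multipliable_one_sub_mul_pow hq (x * q ^ n)
  simp only [hshift] at hmul
  simp only [qPF, qPI, hshift]
  exact hmul.prod_mul_tprod_nat_mul' (f := fun i => 1 - x * q ^ i)

lemma one_sub_mul_qPI (hq : ‖q‖ < 1) (x : ℂ) : (1 - x) * qPI (x * q) q = qPI x q := by
  simpa [qPF] using qPF_mul_qPI hq x 1

lemma qPI_mul_pow_div (hq : ‖q‖ < 1) (hb : ‖b‖ < 1) (hc : ‖c‖ < 1) (n : ℕ) :
    qPI (b * q ^ n) q / qPI (c * q ^ n) q = qPI b q / qPI c q * (qPF c q n / qPF b q n) := by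
  have hb' := qPF_ne_zero hq hb n
  have hc' := qPF_ne_zero hq hc n
  rw [← qPF_mul_qPI hq b n, ← qPF_mul_qPI hq c n]
  field_simp

lemma qPF_div_succ (hq : ‖q‖ < 1) (hc : ‖c‖ < 1) (n : ℕ) :
    qPF b q (n + 1) / qPF c q (n + 1) * (1 - c * q ^ n) =
      qPF b q n / qPF c q n * (1 - b * q ^ n) := by
  rw [qPF_succ, qPF_succ, mul_div_mul_comm, mul_assoc,
    div_mul_cancel₀ _ (one_sub_mul_pow_ne_zero hq hc n)]

lemma norm_one_sub_mul_div_le {𝕜 : Type*} [NormedField 𝕜] {b c y : 𝕜} {ρ B : ℝ} (hρ : ρ < 1)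
    (hb : ‖b‖ ≤ B) (hc : ‖c‖ ≤ ρ) (hy : ‖y‖ ≤ 1) :
    ‖(1 - b * y) / (1 - c * y)‖ ≤ 1 + (B + 1) / (1 - ρ) * ‖y‖ := by
  have hρ' : 0 < 1 - ρ := sub_pos.mpr hρ
  have hcy : ‖c * y‖ ≤ ρ := by
    rw [norm_mul]
    exact (mul_le_of_le_one_right (norm_nonneg c) hy).trans hc
  have hden : 1 - ρ ≤ ‖1 - c * y‖ := by
    have := norm_sub_norm_le 1 (c * y)
    rw [norm_one] at this
    linarith
  have hne : 1 - c * y ≠ 0 := norm_pos_iff.mp (hρ'.trans_le hden)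
  have hcb : ‖c - b‖ ≤ B + 1 := (norm_sub_le c b).trans (by linarith)
  have hB : 0 ≤ B + 1 := (norm_nonneg _).trans hcb
  calc ‖(1 - b * y) / (1 - c * y)‖ = ‖1 + (c - b) * y / (1 - c * y)‖ := by
        rw [one_add_div hne]
        ring_nf
    _ ≤ 1 + ‖c - b‖ * ‖y‖ / ‖1 - c * y‖ := by
        simpa using norm_add_le 1 ((c - b) * y / (1 - c * y))
    _ ≤ 1 + (B + 1) * ‖y‖ / (1 - ρ) := by gcongr
    _ = 1 + (B + 1) / (1 - ρ) * ‖y‖ := by ring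

lemma norm_qPF_div_le {r ρ B : ℝ} (hr : r < 1) (hρ : ρ < 1) (hq : ‖q‖ ≤ r) (hb : ‖b‖ ≤ B)
    (hc : ‖c‖ ≤ ρ) (n : ℕ) :
    ‖qPF b q n / qPF c q n‖ ≤ Real.exp ((B + 1) / (1 - ρ) * (1 - r)⁻¹) := by
  have hr₀ : 0 ≤ r := (norm_nonneg q).trans hq
  have hB : 0 ≤ (B + 1) / (1 - ρ) :=
    div_nonneg (by linarith [norm_nonneg b]) (sub_pos.mpr hρ).le
  have hpow (i : ℕ) : ‖q ^ i‖ ≤ r ^ i := by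
    rw [norm_pow]
    gcongr
  rw [qPF, qPF, ← Finset.prod_div_distrib, norm_prod]
  calc ∏ i ∈ Finset.range n, ‖(1 - b * q ^ i) / (1 - c * q ^ i)‖
      ≤ ∏ i ∈ Finset.range n, (1 + (B + 1) / (1 - ρ) * r ^ i) := by
        refine Finset.prod_le_prod (fun _ _ => norm_nonneg _) fun i _ => ?_
        refine (norm_one_sub_mul_div_le hρ hb hc
          ((hpow i).trans (pow_le_one₀ hr₀ hr.le))).trans ?_
        gcongr
        exact hpow i
    _ ≤ Real.exp (∑ i ∈ Finset.range n, (B + 1) / (1 - ρ) * r ^ i) :=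
        Real.prod_one_add_le_exp_sum _ fun i => by positivity
    _ ≤ Real.exp ((B + 1) / (1 - ρ) * (1 - r)⁻¹) := by
        rw [← Finset.mul_sum, ← tsum_geometric_of_lt_one hr₀ hr]
        gcongr
        exact (summable_geometric_of_lt_one hr₀ hr).sum_le_tsum _ fun i _ => by positivity

lemma exists_norm_qPF_div_le (b : ℂ) (hq : ‖q‖ < 1) (hc : ‖c‖ < 1) :
    ∃ M, ∀ n, ‖qPF b q n / qPF c q n‖ ≤ M :=
  ⟨_, norm_qPF_div_le hq hc le_rfl le_rfl le_rfl⟩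

lemma tendsto_qPF_div (b : ℂ) (hq : ‖q‖ < 1) (hc : ‖c‖ < 1) :
    Tendsto (fun n => qPF b q n / qPF c q n) atTop (𝓝 (qPI b q / qPI c q)) :=
  (tendsto_qPF hq b).div (tendsto_qPF hq c) (qPI_ne_zero hq hc)

lemma qPI_mul_eq_of_recurrence {h : ℕ → ℂ} {L : ℂ} (hq : ‖q‖ < 1)
    (hrec : ∀ n, (1 - b * q ^ n) * h (n + 1) = (1 - c * q ^ n) * h n)
    (hL : Tendsto h atTop (𝓝 L)) : qPI b q * L = qPI c q * h 0 := by
  have hprod (n : ℕ) : qPF b q n * h n = qPF c q n * h 0 := by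
    induction n with
    | zero => simp only [qPF_zero]
    | succ n ih =>
      rw [qPF_succ, qPF_succ]
      linear_combination qPF b q n * hrec n + (1 - c * q ^ n) * ih
  refine tendsto_nhds_unique ((tendsto_qPF hq b).mul hL) ?_
  simpa only [hprod] using (tendsto_qPF hq c).mul_const (h 0)

end Pochhammer

section HeineSeries

variable {a b c d q x w : ℂ}

/-- The basic hypergeometric series `₂φ₁(b, q; c; q, x) = ∑ₙ (b;q)ₙ / (c;q)ₙ xⁿ`. -/
def qHyp (b c q x : ℂ) : ℂ := ∑' n : ℕ, qPF b q n / qPF c q n * x ^ n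

lemma summable_norm_qHyp (b : ℂ) (hq : ‖q‖ < 1) (hc : ‖c‖ < 1) (hx : ‖x‖ < 1) :
    Summable fun n : ℕ => ‖qPF b q n / qPF c q n * x ^ n‖ := by
  obtain ⟨M, hM⟩ := exists_norm_qPF_div_le b hq hc
  refine ((summable_geometric_of_lt_one (norm_nonneg x) hx).mul_left M).of_nonneg_of_le
    (fun _ => norm_nonneg _) fun n => ?_
  rw [norm_mul, norm_pow]
  gcongr
  exact hM n

lemma qHyp_zero (b c q : ℂ) : qHyp b c q 0 = 1 := by
  rw [qHyp, tsum_eq_single 0 fun n hn => by simp [hn]]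
  simp [qPF_zero]

lemma tendsto_qHyp_mul_pow (b : ℂ) (hq : ‖q‖ < 1) (hc : ‖c‖ < 1) (hx : ‖x‖ < 1) :
    Tendsto (fun n : ℕ => qHyp b c q (x * q ^ n)) atTop (𝓝 1) := by
  have hlim : Tendsto (fun n : ℕ => x * q ^ n) atTop (𝓝 0) := by
    simpa using (tendsto_pow_atTop_nhds_zero_of_norm_lt_one hq).const_mul x
  rw [← qHyp_zero b c q]
  refine tendsto_tsum_of_dominated_convergence (summable_norm_qHyp b hq hc hx)
    (fun k => (hlim.pow k).const_mul _) (.of_forall fun n k => ?_)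
  rw [norm_mul, norm_mul, norm_pow, norm_pow, norm_mul, norm_pow]
  gcongr
  exact mul_le_of_le_one_right (norm_nonneg x) (pow_le_one₀ (norm_nonneg q) hq.le)

lemma one_sub_mul_qHyp (b : ℂ) (hq : ‖q‖ < 1) (hd : ‖d * q‖ < 1) (hx : ‖x‖ < 1) :
    (1 - x) * qHyp b (d * q) q x = (d - b * x) * qHyp b (d * q) q (x * q) + 1 - d := by
  have hxq : ‖x * q‖ < 1 := by simpa using norm_mul_pow_lt_one hq hx 1
  have hs := (summable_norm_qHyp b hq hd hx).of_norm
  have hsq := (summable_norm_qHyp b hq hd hxq).of_norm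
  have hsum : qHyp b (d * q) q x - d * qHyp b (d * q) q (x * q) =
      1 - d + (x * qHyp b (d * q) q x - b * x * qHyp b (d * q) q (x * q)) := by
    simp only [qHyp, ← tsum_mul_left]
    rw [← hs.tsum_sub (hsq.mul_left d), (hs.sub (hsq.mul_left d)).tsum_eq_zero_add,
      ← (hs.mul_left x).tsum_sub (hsq.mul_left (b * x))]
    congr 1
    · simp [qPF_zero]
    · refine tsum_congr fun n => ?_
      linear_combination x ^ (n + 1) * qPF_div_succ (b := b) hq hd n
  linear_combination hsum

/-- The `q`-binomial theorem. -/
theorem qHyp_self (a : ℂ) (hq : ‖q‖ < 1) (hx : ‖x‖ < 1) :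
    qHyp a q q x = qPI (a * x) q / qPI x q := by
  have hrec (n : ℕ) : (1 - a * x * q ^ n) * qHyp a q q (x * q ^ (n + 1)) =
      (1 - x * q ^ n) * qHyp a q q (x * q ^ n) := by
    have := one_sub_mul_qHyp (d := 1) a hq (by simpa using hq) (norm_mul_pow_lt_one hq hx n)
    rw [one_mul, mul_assoc x, ← pow_succ] at this
    linear_combination -this
  have := qPI_mul_eq_of_recurrence hq hrec (tendsto_qHyp_mul_pow a hq hq hx)
  rw [eq_div_iff (qPI_ne_zero hq hx)]
  simpa [mul_comm] using this.symm

/-- A case of Heine's transformation. -/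
theorem qPI_div_mul_qHyp (hq : ‖q‖ < 1) (hx : ‖x‖ < 1) (hax : ‖a * x‖ < 1) (hw : ‖w‖ < 1) :
    qPI (a * x) q / qPI x q * qHyp x (a * x) q w =
      ∑' n : ℕ, qPF a q n / qPF q q n * x ^ n / (1 - w * q ^ n) := by
  set t : ℕ → ℕ → ℂ := fun m n => w ^ m * (qPF a q n / qPF q q n * (x * q ^ m) ^ n) with ht
  have hbinom (m : ℕ) : ∑' n, t m n =
      qPI (a * x) q / qPI x q * (qPF x q m / qPF (a * x) q m * w ^ m) := by
    rw [tsum_mul_left, ← qHyp, qHyp_self a hq (norm_mul_pow_lt_one hq hx m), ← mul_assoc a,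
      qPI_mul_pow_div hq hax hx]
    ring
  have hgeom (n : ℕ) : ∑' m, t m n = qPF a q n / qPF q q n * x ^ n / (1 - w * q ^ n) := by
    rw [div_eq_mul_inv _ (1 - w * q ^ n),
      ← tsum_geometric_of_norm_lt_one (norm_mul_pow_lt_one hq hw n), ← tsum_mul_left]
    refine tsum_congr fun m => ?_
    simp only [ht, mul_pow, ← pow_mul, mul_comm n m]
    ring
  have hsum : Summable (Function.uncurry t) := by
    refine Summable.of_norm_bounded ((summable_geometric_of_lt_one (norm_nonneg w) hw).mul_of_nonneg
      (summable_norm_qHyp a hq hq hx) (fun _ => by positivity) fun _ => norm_nonneg _) ?_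
    rintro ⟨m, n⟩
    rw [Function.uncurry_apply_pair, ht, norm_mul, norm_pow, norm_mul, norm_mul, norm_pow, norm_pow,
      norm_mul, norm_pow]
    gcongr
    exact mul_le_of_le_one_right (norm_nonneg x) (pow_le_one₀ (norm_nonneg q) hq.le)
  rw [qHyp, ← tsum_mul_left, ← tsum_congr hbinom, ← tsum_congr hgeom, hsum.tsum_comm]

end HeineSeries

lemma tendsto_tsum_mul_shift {R : Type*} [NormedRing R] [CompleteSpace R] {u : ℕ → R} {L : R}
    {g : ℤ → R} (hu : Tendsto u atTop (𝓝 L)) (hg : Summable fun k => ‖g k‖) :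
    Tendsto (fun N : ℕ => ∑' n : ℕ, u n * g (n - N)) atTop (𝓝 (L * ∑' k, g k)) := by
  obtain ⟨M, hM⟩ := (Metric.isBounded_range_of_tendsto u hu).exists_norm_le
  have hM (n : ℕ) : ‖u n‖ ≤ M := hM _ ⟨n, rfl⟩
  have hM₀ : 0 ≤ M := (norm_nonneg _).trans (hM 0)
  set f : ℕ → ℤ → R := fun N k => if -N ≤ k then u (k + N).toNat * g k else 0 with hf
  have hbilateral (N : ℕ) : ∑' n : ℕ, u n * g (n - N) = ∑' k, f N k := by
    have hinj : Function.Injective fun n : ℕ => (n : ℤ) - N := fun m n h => by simpa using h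
    rw [← hinj.tsum_eq]
    · simp [hf]
    · intro k hk
      by_cases hle : -(N : ℤ) ≤ k
      · exact ⟨(k + N).toNat, by grind⟩
      · simp [hf, hle] at hk
  simp only [hbilateral, ← hg.of_norm.tsum_mul_left]
  refine tendsto_tsum_of_dominated_convergence (hg.mul_left M) (fun k => ?_)
    (.of_forall fun N k => ?_)
  · have hshift : Tendsto (fun N : ℕ => (k + N).toNat) atTop atTop :=
      tendsto_atTop.mpr fun b => by
        filter_upwards [eventually_ge_atTop (b + (-k).toNat)] with N hN
        omega
    refine ((hu.comp hshift).mul_const (g k)).congr' ?_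
    filter_upwards [eventually_ge_atTop (-k).toNat] with N hN
    rw [hf, Function.comp_apply]
    exact (if_pos (by omega)).symm
  · by_cases hle : -(N : ℤ) ≤ k
    · simp only [hf, if_pos hle]
      exact (norm_mul_le _ _).trans (by gcongr; exact hM _)
    · simpa only [hf, if_neg hle, norm_zero] using mul_nonneg hM₀ (norm_nonneg _)

section PartialFractions

variable {a v q z : ℂ}

/-- The partial fraction series `∑ₙ (a;q)ₙ / (q;q)ₙ (v q)ⁿ / (z + qⁿ)`, whose poles in `z` are the
points `-qⁿ`, `n ≥ 0`, accumulating at the origin. -/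
def qPartialFraction (a v q z : ℂ) : ℂ :=
  ∑' n : ℕ, qPF a q n / qPF q q n * (v * q) ^ n / (z + q ^ n)

/-- The general term of the bilateral series `∑ₖ (v q)ᵏ / (z + qᵏ)`, `k ∈ ℤ`, which describes the
behaviour of `qPartialFraction a v q` at the origin. -/
def bilateralTerm (v q z : ℂ) (k : ℤ) : ℂ := (v * q) ^ k / (z + q ^ k)

/-- The solution regular at `z = 0` of the `q`-difference equation in `z` satisfied by
`qPartialFraction a v q`. -/
def qRegularPart (a v q z : ℂ) : ℂ :=
  qPI (a * v) q / qPI v q * qHyp (a⁻¹ * v⁻¹ * q) (v⁻¹ * q) q (-(a * z))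

lemma pow_mul_add_pow {𝕜 : Type*} [Field 𝕜] {q : 𝕜} (hq₀ : q ≠ 0) (z : 𝕜) (N n : ℕ) :
    q ^ N * z + q ^ n = q ^ N * (z + q ^ ((n : ℤ) - N)) := by
  rw [zpow_sub₀ hq₀, zpow_natCast, zpow_natCast]
  field_simp

lemma exists_norm_inv_add_pow_le (hq : ‖q‖ < 1) (hz : z ≠ 0) :
    ∃ M, ∀ n : ℕ, ‖(z + q ^ n)⁻¹‖ ≤ M := by
  have hlim : Tendsto (fun n : ℕ => (z + q ^ n)⁻¹) atTop (𝓝 z⁻¹) := by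
    simpa using ((tendsto_pow_atTop_nhds_zero_of_norm_lt_one hq).const_add z).inv₀ (by simpa)
  obtain ⟨M, hM⟩ := (Metric.isBounded_range_of_tendsto _ hlim).exists_norm_le
  exact ⟨M, fun n => hM _ ⟨n, rfl⟩⟩

lemma summable_norm_div_add_pow {u : ℕ → ℂ} (hq : ‖q‖ < 1) (hz : z ≠ 0)
    (hu : Summable fun n => ‖u n‖) : Summable fun n => ‖u n / (z + q ^ n)‖ := by
  obtain ⟨M, hM⟩ := exists_norm_inv_add_pow_le hq hz
  refine (hu.mul_right M).of_nonneg_of_le (fun _ => norm_nonneg _) fun n => ?_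
  rw [div_eq_mul_inv, norm_mul]
  gcongr
  exact hM n

lemma one_add_mul_qPartialFraction (a w : ℂ) (hq : ‖q‖ < 1) (hvq : ‖v * q‖ < 1) (hz : z ≠ 0)
    (hpole : ∀ n : ℕ, z + q ^ n ≠ 0) :
    (1 + w * z) * qPartialFraction a v q z = w * qHyp a q q (v * q) +
      ∑' n : ℕ, qPF a q n / qPF q q n * (v * q) ^ n * (1 - w * q ^ n) / (z + q ^ n) := by
  have hs := summable_norm_qHyp a hq hq hvq
  have hF := (summable_norm_div_add_pow hq hz hs).of_norm
  rw [qPartialFraction, qHyp, ← tsum_mul_left, ← tsum_mul_left, ← sub_eq_iff_eq_add',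
    ← (hF.mul_left _).tsum_sub (hs.of_norm.mul_left w)]
  refine tsum_congr fun n => ?_
  have := hpole n
  field_simp
  ring

lemma one_add_mul_qPartialFraction_mul (a : ℂ) (hq : ‖q‖ < 1) (hq₀ : q ≠ 0) (hvq : ‖v * q‖ < 1)
    (hz : z ≠ 0) (hpole : ∀ n : ℕ, z + q ^ n ≠ 0) (hpole' : q * z + 1 ≠ 0) :
    (1 + q * z) * qPartialFraction a v q (q * z) =
      v * (1 + a * z) * qPartialFraction a v q z + (1 - a * v) * qHyp a q q (v * q) := by
  have hscale (n : ℕ) : q * z + q ^ (n + 1) = q * (z + q ^ n) := by ring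
  have hpoleq (n : ℕ) : q * z + q ^ n ≠ 0 := by
    cases n with
    | zero => simpa using hpole'
    | succ n => exact hscale n ▸ mul_ne_zero hq₀ (hpole n)
  have hshift : ∑' n : ℕ, qPF a q n / qPF q q n * (v * q) ^ n * (1 - 1 * q ^ n) / (q * z + q ^ n) =
      v * ∑' n : ℕ, qPF a q n / qPF q q n * (v * q) ^ n * (1 - a * q ^ n) / (z + q ^ n) := by
    rw [← Nat.succ_injective.tsum_eq, ← tsum_mul_left]
    · refine tsum_congr fun n => ?_
      have hn := hpole n
      rw [Nat.succ_eq_add_one, hscale]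
      field_simp
      linear_combination v ^ (n + 1) * q ^ (n + 1) * qPF_div_succ (b := a) hq hq n
    · refine Function.support_subset_iff'.mpr fun n hn => ?_
      have : n = 0 := by simpa using hn
      simp [this]
  have hz_eq := one_add_mul_qPartialFraction a a hq hvq hz hpole
  have hqz_eq := one_add_mul_qPartialFraction a 1 hq hvq (mul_ne_zero hq₀ hz) hpoleq
  rw [hshift] at hqz_eq
  linear_combination hqz_eq - v * hz_eq

lemma norm_inv_lt_one {𝕜 : Type*} [NormedDivisionRing 𝕜] {x : 𝕜} (hx : 1 < ‖x‖) : ‖x⁻¹‖ < 1 := by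
  simpa using inv_lt_one_of_one_lt₀ hx

lemma norm_inv_mul_lt_one {𝕜 : Type*} [NormedDivisionRing 𝕜] {x y : 𝕜} (hy : ‖y‖ < 1)
    (hx : 1 < ‖x‖) : ‖x⁻¹ * y‖ < 1 := by
  simpa using norm_mul_pow_lt_one hy (norm_inv_lt_one hx) 1

lemma summable_norm_bilateralTerm (hq : ‖q‖ < 1) (hq₀ : q ≠ 0) (hv : 1 < ‖v‖)
    (hvq : ‖v * q‖ < 1) (hz : z ≠ 0) : Summable fun k => ‖bilateralTerm v q z k‖ := by
  refine .of_nat_of_neg ?_ ?_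
  · simpa only [bilateralTerm, zpow_natCast] using summable_norm_div_add_pow hq hz
      ((summable_geometric_of_lt_one (norm_nonneg _) hvq).congr fun n => (norm_pow _ n).symm)
  · have hs := summable_norm_div_add_pow hq (inv_ne_zero hz)
      ((summable_geometric_of_lt_one (norm_nonneg _) (norm_inv_lt_one hv)).congr
        fun n => (norm_pow _ n).symm)
    refine (hs.mul_left ‖z⁻¹‖).congr fun n => ?_
    rw [← norm_mul, bilateralTerm]
    congr 1
    have : z⁻¹ + q ^ n = z⁻¹ * q ^ n * (z + q ^ (-(n : ℤ))) := by
      simp only [zpow_neg, zpow_natCast]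
      field_simp
      ring
    rw [this]
    simp only [zpow_neg, zpow_natCast, mul_pow, inv_pow]
    field_simp

lemma tendsto_qPartialFraction_mul_pow (a : ℂ) (hq : ‖q‖ < 1) (hq₀ : q ≠ 0) (hv : 1 < ‖v‖)
    (hvq : ‖v * q‖ < 1) (hz : z ≠ 0) :
    Tendsto (fun N : ℕ => v⁻¹ ^ N * qPartialFraction a v q (q ^ N * z)) atTop
      (𝓝 (qPI a q / qPI q q * ∑' k, bilateralTerm v q z k)) := by
  have hv₀ : v ≠ 0 := norm_pos_iff.mp (zero_lt_one.trans hv)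
  refine (tendsto_tsum_mul_shift (tendsto_qPF_div a hq hq)
    (summable_norm_bilateralTerm hq hq₀ hv hvq hz)).congr fun N => ?_
  rw [qPartialFraction, ← tsum_mul_left]
  refine tsum_congr fun n => ?_
  rw [bilateralTerm, pow_mul_add_pow hq₀, zpow_sub₀ (mul_ne_zero hv₀ hq₀), zpow_natCast,
    zpow_natCast, mul_pow v q N, inv_pow]
  field_simp

lemma one_sub_mul_qHyp_self (a : ℂ) (hq : ‖q‖ < 1) (hv : v ≠ 1) (hvq : ‖v * q‖ < 1) :
    (1 - a * v) * qHyp a q q (v * q) = qPI (a * v) q / qPI v q * (1 - v) := by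
  have hvq' := qPI_ne_zero hq hvq
  have hv' : 1 - v ≠ 0 := sub_ne_zero.mpr hv.symm
  rw [qHyp_self a hq hvq, ← one_sub_mul_qPI hq (a * v), ← one_sub_mul_qPI hq v, mul_assoc a v]
  field_simp

lemma one_add_mul_qRegularPart_mul (hq : ‖q‖ < 1) (ha : a ≠ 0) (hv : 1 < ‖v‖)
    (hvq : ‖v * q‖ < 1) (haz : ‖a * z‖ < 1) :
    (1 + q * z) * qRegularPart a v q (q * z) =
      v * (1 + a * z) * qRegularPart a v q z + (1 - a * v) * qHyp a q q (v * q) := by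
  have hv₀ : v ≠ 0 := norm_pos_iff.mp (zero_lt_one.trans hv)
  have hv₁ : v ≠ 1 := by
    rintro rfl
    simp at hv
  have hG := one_sub_mul_qHyp (x := -(a * z)) (a⁻¹ * v⁻¹ * q) hq (norm_inv_mul_lt_one hq hv)
    (by rwa [norm_neg])
  have harg : -(a * (q * z)) = -(a * z) * q := by ring
  have hcoeff : v * (v⁻¹ - a⁻¹ * v⁻¹ * q * -(a * z)) = 1 + q * z := by
    field_simp
    ring
  rw [one_sub_mul_qHyp_self a hq hv₁ hvq, qRegularPart, qRegularPart, harg]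
  linear_combination -qPI (a * v) q / qPI v q *
    (v * hG + qHyp (a⁻¹ * v⁻¹ * q) (v⁻¹ * q) q (-(a * z) * q) * hcoeff - mul_inv_cancel₀ hv₀)

lemma tendsto_qRegularPart_mul_pow (hq : ‖q‖ < 1) (hv : 1 < ‖v‖) (haz : ‖a * z‖ < 1) :
    Tendsto (fun N : ℕ => v⁻¹ ^ N * qRegularPart a v q (q ^ N * z)) atTop (𝓝 0) := by
  have hG : Tendsto (fun N : ℕ => qHyp (a⁻¹ * v⁻¹ * q) (v⁻¹ * q) q (-(a * (q ^ N * z)))) atTop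
      (𝓝 1) :=
    (tendsto_qHyp_mul_pow _ hq (norm_inv_mul_lt_one hq hv) (by rwa [norm_neg])).congr fun N => by
      congr 1
      ring
  simpa [qRegularPart] using (tendsto_pow_atTop_nhds_zero_of_norm_lt_one (norm_inv_lt_one hv)).mul
    (hG.const_mul (qPI (a * v) q / qPI v q))

/-- The connection formula between the singular points `∞` and `0` of the `q`-difference equation
`(1 + q z) F(q z) = v (1 + a z) F(z) + const`: the difference of two of its solutions solves the
homogeneous equation, hence is determined by its behaviour at `0`. -/
theorem qPartialFraction_eq (hq : ‖q‖ < 1) (hq₀ : q ≠ 0) (ha : a ≠ 0) (hv : 1 < ‖v‖)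
    (hvq : ‖v * q‖ < 1) (hz : z ≠ 0) (haz : ‖a * z‖ < 1) (hpole : ∀ k : ℤ, z + q ^ k ≠ 0) :
    qPartialFraction a v q z = qRegularPart a v q z +
      qPI (-(q * z)) q / qPI (-(a * z)) q *
        (qPI a q / qPI q q * ∑' k, bilateralTerm v q z k) := by
  have hv₀ : v ≠ 0 := norm_pos_iff.mp (zero_lt_one.trans hv)
  set E : ℂ → ℂ := fun y => qPartialFraction a v q y - qRegularPart a v q y
  have hpoleN (N n : ℕ) : q ^ N * z + q ^ n ≠ 0 :=
    pow_mul_add_pow hq₀ z N n ▸ mul_ne_zero (pow_ne_zero N hq₀) (hpole _)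
  have hrec (N : ℕ) : (1 - -(q * z) * q ^ N) * (v⁻¹ ^ (N + 1) * E (q ^ (N + 1) * z)) =
      (1 - -(a * z) * q ^ N) * (v⁻¹ ^ N * E (q ^ N * z)) := by
    have hazN : ‖a * (q ^ N * z)‖ < 1 := by
      simpa only [mul_assoc, mul_comm z] using norm_mul_pow_lt_one hq haz N
    have hF := one_add_mul_qPartialFraction_mul a hq hq₀ hvq
      (mul_ne_zero (pow_ne_zero N hq₀) hz) (hpoleN N)
      (by simpa [pow_succ', mul_assoc] using hpoleN (N + 1) 0)
    have hG := one_add_mul_qRegularPart_mul hq ha hv hvq hazN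
    rw [← mul_assoc q, ← pow_succ'] at hF hG
    rw [pow_succ v⁻¹]
    linear_combination v⁻¹ ^ N * v⁻¹ * (hF - hG) +
      v⁻¹ ^ N * (1 + a * (q ^ N * z)) * E (q ^ N * z) * mul_inv_cancel₀ hv₀
  have hlim := (tendsto_qPartialFraction_mul_pow a hq hq₀ hv hvq hz).sub
    (tendsto_qRegularPart_mul_pow hq hv haz)
  simp only [sub_zero, ← mul_sub] at hlim
  have := qPI_mul_eq_of_recurrence hq hrec hlim
  rw [pow_zero, pow_zero, one_mul, one_mul] at this
  rw [div_mul_eq_mul_div, this, mul_div_cancel_left₀ _ (qPI_ne_zero hq (by rwa [norm_neg]))]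
  exact (add_sub_cancel _ _).symm

end PartialFractions

section Poisson

open MeasureTheory FourierTransform

lemma abs_sinh_le_norm_sin (x y : ℝ) : |Real.sinh y| ≤ ‖Complex.sin (x + y * I)‖ := by
  have hsin : Complex.sin (x + y * I) =
      ⟨Real.sin x * Real.cosh y, Real.cos x * Real.sinh y⟩ := by
    apply Complex.ext <;> simp [Complex.sin_add_mul_I, ← Complex.ofReal_sin, ← Complex.ofReal_cos,
      ← Complex.ofReal_sinh, ← Complex.ofReal_cosh]
  rw [hsin, Complex.norm_eq_sqrt_sq_add_sq]
  apply Real.abs_le_sqrt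
  linear_combination Real.sin_sq_add_cos_sq x * -Real.sinh y ^ 2 +
    sq_nonneg (Real.sin x) - Real.sin x ^ 2 * Real.cosh_sq y

lemma sq_div_four_le_abs_sinh (y : ℝ) : y ^ 2 / 4 ≤ |Real.sinh y| := by
  rw [Real.abs_sinh, ← sq_abs, Real.sinh_eq]
  have hquad := Real.quadratic_le_exp_of_nonneg (abs_nonneg y)
  have hexp : Real.exp (-|y|) ≤ 1 := Real.exp_le_one_iff.mpr (neg_nonpos.mpr (abs_nonneg y))
  linarith [abs_nonneg y]

/-- The Fourier coefficient `π / sin (π g + 2 i k π² / L)` of the periodization of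
`logisticKernel g L`; `pcoefR q` is the case `g = γ(q)`, `L = log (1 / q)`. -/
def logisticCoeff (g L : ℝ) (k : ℤ) : ℂ :=
  (Real.pi : ℂ) / Complex.sin ((Real.pi : ℂ) * (g : ℂ) +
    2 * Complex.I * (k : ℂ) * (Real.pi : ℂ) ^ 2 / (L : ℂ))

lemma summable_norm_logisticCoeff (g : ℝ) {L : ℝ} (hL : L ≠ 0) :
    Summable fun k => ‖logisticCoeff g L k‖ := by
  have hs : Summable fun k : ℤ => L ^ 2 / Real.pi ^ 3 * (1 / (k : ℝ) ^ 2) :=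
    (Real.summable_one_div_int_pow.mpr one_lt_two).mul_left _
  refine hs.of_norm_bounded_eventually ?_
  filter_upwards [(Set.finite_singleton (0 : ℤ)).compl_mem_cofinite] with k hk
  have hk₀ : (k : ℝ) ≠ 0 := by simpa using hk
  have harg : (Real.pi : ℂ) * g + 2 * Complex.I * k * (Real.pi : ℂ) ^ 2 / L =
      ((Real.pi * g : ℝ) : ℂ) + ((2 * k * Real.pi ^ 2 / L : ℝ) : ℂ) * I := by
    push_cast
    ring
  rw [norm_norm, logisticCoeff, norm_div, harg, Complex.norm_of_nonneg Real.pi_pos.le]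
  calc Real.pi / ‖Complex.sin (((Real.pi * g : ℝ) : ℂ) + ((2 * k * Real.pi ^ 2 / L : ℝ) : ℂ) * I)‖
      ≤ Real.pi / ((2 * k * Real.pi ^ 2 / L) ^ 2 / 4) := by
        gcongr
        exact (sq_div_four_le_abs_sinh _).trans (abs_sinh_le_norm_sin _ _)
    _ = L ^ 2 / Real.pi ^ 3 * (1 / (k : ℝ) ^ 2) := by
        field_simp
        norm_num

lemma sigmoid_eq_exp (x : ℝ) :
    Real.sigmoid x = Real.exp (x - Real.log (1 + Real.exp x)) := by
  rw [Real.exp_sub, Real.exp_log (by positivity), Real.sigmoid_def, Real.exp_neg]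
  field_simp
  ring

lemma one_sub_sigmoid_eq_exp (x : ℝ) :
    1 - Real.sigmoid x = Real.exp (-Real.log (1 + Real.exp x)) := by
  rw [Real.exp_neg, Real.exp_log (by positivity), ← Real.sigmoid_neg, Real.sigmoid_def, neg_neg]

lemma ofReal_exp_cpow (y : ℝ) (w : ℂ) : (Real.exp y : ℂ) ^ w = Complex.exp (y * w) := by
  rw [Complex.cpow_def_of_ne_zero (by exact_mod_cast (Real.exp_pos y).ne'),
    ← Complex.ofReal_log (Real.exp_pos y).le, Real.log_exp]

lemma sigmoid_cpow_mul (u : ℂ) (x : ℝ) :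
    (Real.sigmoid x * (1 - Real.sigmoid x)) •
      ((Real.sigmoid x : ℂ) ^ (u - 1) * (1 - Real.sigmoid x : ℂ) ^ (1 - u - 1)) =
      Complex.exp (u * x) / ((1 + Real.exp x : ℝ) : ℂ) := by
  have hpos : 0 < 1 + Real.exp x := by positivity
  rw [← Complex.ofReal_one, ← Complex.ofReal_sub, one_sub_sigmoid_eq_exp, sigmoid_eq_exp,
    ofReal_exp_cpow, ofReal_exp_cpow, ← Real.exp_add, Complex.real_smul, Complex.ofReal_exp,
    ← Complex.exp_add, ← Complex.exp_add, ← Real.exp_log hpos, Complex.ofReal_exp,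
    ← Complex.exp_sub, Real.log_exp]
  congr 1
  push_cast
  ring

/-- Substituting the sigmoid function in Euler's Beta integral `B(u, 1 - u)`. -/
lemma integral_exp_div_one_add_exp {u : ℂ} (h₀ : 0 < u.re) (h₁ : u.re < 1) :
    ∫ x : ℝ, Complex.exp (u * x) / ((1 + Real.exp x : ℝ) : ℂ) =
      Real.pi / Complex.sin (Real.pi * u) := by
  have hbeta : Complex.betaIntegral u (1 - u) = Real.pi / Complex.sin (Real.pi * u) := by
    rw [Complex.betaIntegral_eq_Gamma_mul_div u (1 - u) h₀ (by simpa using h₁),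
      Complex.Gamma_mul_Gamma_one_sub, add_sub_cancel, Complex.Gamma_one, div_one]
  rw [← hbeta, Complex.betaIntegral, intervalIntegral.integral_of_le zero_le_one,
    integral_Ioc_eq_integral_Ioo, ← Real.range_sigmoid, ← Set.image_univ,
    integral_image_eq_integral_abs_deriv_smul MeasurableSet.univ
      (fun x _ => (Real.hasDerivAt_sigmoid x).hasDerivWithinAt) Real.sigmoid_injective.injOn,
    setIntegral_univ]
  refine integral_congr_ae (.of_forall fun x => ?_)
  have hderiv : 0 < Real.sigmoid x * (1 - Real.sigmoid x) :=
    mul_pos (Real.sigmoid_pos x) (sub_pos.mpr (Real.sigmoid_lt_one x))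
  simp only [abs_of_pos hderiv, sigmoid_cpow_mul]

/-- The function `e^{g L x} / (1 + e^{L x})`, whose samples at a translate of `ℤ` are the terms of
the bilateral series up to a factor. -/
def logisticKernel (g L x : ℝ) : ℂ :=
  ((Real.exp (g * L * x) / (1 + Real.exp (L * x)) : ℝ) : ℂ)

variable {g L : ℝ}

lemma continuous_logisticKernel (g L : ℝ) : Continuous (logisticKernel g L) :=
  Complex.continuous_ofReal.comp
    (.div (by fun_prop) (by fun_prop) fun x => by positivity)

lemma logisticKernel_neg (g L x : ℝ) : logisticKernel g L (-x) = logisticKernel (1 - g) L x := by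
  have hexp : Real.exp ((1 - g) * L * x) = Real.exp (L * x) * Real.exp (-(g * L * x)) := by
    rw [← Real.exp_add]
    ring_nf
  rw [logisticKernel, logisticKernel, hexp, mul_neg, mul_neg, Real.exp_neg (L * x)]
  congr 1
  field_simp
  ring

lemma logisticKernel_isBigO_atTop (hL : 0 < L) (hg : g < 1) :
    logisticKernel g L =O[atTop] fun x : ℝ => |x| ^ (-2 : ℝ) := by
  have habs : (fun x : ℝ => x ^ (-2 : ℝ)) =ᶠ[atTop] fun x : ℝ => |x| ^ (-2 : ℝ) := by
    filter_upwards [eventually_ge_atTop 0] with x hx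
    rw [abs_of_nonneg hx]
  refine (IsBigO.of_norm_le fun x => ?_).trans
    ((isLittleO_exp_neg_mul_rpow_atTop (mul_pos (sub_pos.mpr hg) hL) (-2)).isBigO.trans_eventuallyEq
      habs)
  rw [logisticKernel, Complex.norm_of_nonneg (by positivity), div_le_iff₀ (by positivity), mul_add,
    mul_one, ← Real.exp_add]
  calc Real.exp (g * L * x) = Real.exp (-((1 - g) * L) * x + L * x) := by ring_nf
    _ ≤ Real.exp (-((1 - g) * L) * x) + Real.exp (-((1 - g) * L) * x + L * x) :=
        le_add_of_nonneg_left (Real.exp_pos _).le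

lemma logisticKernel_isBigO_cocompact (hL : 0 < L) (h₀ : 0 < g) (h₁ : g < 1) :
    logisticKernel g L =O[cocompact ℝ] fun x : ℝ => |x| ^ (-2 : ℝ) := by
  rw [cocompact_eq_atBot_atTop, isBigO_sup]
  refine ⟨?_, logisticKernel_isBigO_atTop hL h₁⟩
  have := (logisticKernel_isBigO_atTop hL (sub_lt_self 1 h₀)).comp_tendsto tendsto_neg_atBot_atTop
  simpa only [Function.comp_def, ← logisticKernel_neg, neg_neg, abs_neg] using this

lemma fourier_logisticKernel (hL : 0 < L) (h₀ : 0 < g) (h₁ : g < 1) (k : ℤ) :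
    𝓕 (logisticKernel g L) (k : ℝ) = logisticCoeff g L (-k) / L := by
  have hL' : (L : ℂ) ≠ 0 := by exact_mod_cast hL.ne'
  set u : ℂ := g - 2 * Real.pi * I * k / L with hu
  have hre : u.re = g := by
    have : u = (g : ℂ) - ((2 * Real.pi * k / L : ℝ) : ℂ) * I := by
      rw [hu]
      push_cast
      ring
    simp [this]
  set f : ℝ → ℂ := fun y => Complex.exp (u * y) / ((1 + Real.exp y : ℝ) : ℂ) with hf
  have hintegrand (x : ℝ) :
      Complex.exp (↑(-2 * Real.pi * x * (k : ℝ)) * I) • logisticKernel g L x = f (L * x) := by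
    rw [logisticKernel, smul_eq_mul, Complex.ofReal_div, ← mul_div_assoc, Complex.ofReal_exp,
      ← Complex.exp_add, hf, hu]
    congr 2
    push_cast
    field_simp
    ring
  have hsin : (Real.pi : ℂ) * u = Real.pi * g + 2 * I * ((-k : ℤ) : ℂ) * (Real.pi : ℂ) ^ 2 / L := by
    rw [hu]
    push_cast
    ring
  rw [Real.fourier_real_eq_integral_exp_smul, integral_congr_ae (.of_forall hintegrand),
    Measure.integral_comp_mul_left f L, integral_exp_div_one_add_exp (by rwa [hre]) (by rwa [hre]),
    hsin, abs_of_pos (inv_pos.mpr hL), Complex.real_smul, Complex.ofReal_inv, inv_mul_eq_div,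
    logisticCoeff]

lemma tsum_logisticKernel_add_int (hL : 0 < L) (h₀ : 0 < g) (h₁ : g < 1) (w : ℝ) :
    ∑' n : ℤ, logisticKernel g L (w + n) =
      (1 / L) * ∑' k : ℤ, logisticCoeff g L k * Complex.exp (-2 * Real.pi * I * k * w) := by
  have hs : Summable fun k : ℤ => logisticCoeff g L (-k) / L :=
    ((summable_norm_logisticCoeff g hL.ne').of_norm.comp_injective neg_injective).div_const _
  rw [Real.tsum_eq_tsum_fourier_of_rpow_decay_of_summable (continuous_logisticKernel g L)
      one_lt_two (logisticKernel_isBigO_cocompact hL h₀ h₁)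
      (by simpa only [fourier_logisticKernel hL h₀ h₁] using hs) w,
    ← (Equiv.neg ℤ).tsum_eq, ← tsum_mul_left]
  refine tsum_congr fun k => ?_
  rw [fourier_logisticKernel hL h₀ h₁, fourier_coe_apply, Equiv.neg_apply, neg_neg,
    div_mul_eq_mul_div, one_div, inv_mul_eq_div]
  congr 3
  push_cast
  ring

/-- The bilateral series is a periodization of the logistic kernel, in the variable `log z`. -/
theorem tsum_bilateralTerm {q z : ℝ} (hq₀ : 0 < q) (hq₁ : q < 1) (h₀ : 0 < g) (h₁ : g < 1)
    (hz : 0 < z) :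
    ∑' k, bilateralTerm ((q ^ (-g) : ℝ) : ℂ) q z k =
      ((z ^ (-g) : ℝ) : ℂ) * ((1 / (Real.log (1 / q) : ℂ)) *
        ∑' k : ℤ, logisticCoeff g (Real.log (1 / q)) k *
          Complex.exp (-2 * Real.pi * I * k * (Real.log z / Real.log (1 / q) : ℝ))) := by
  have hL : 0 < Real.log (1 / q) := Real.log_pos ((one_lt_div hq₀).mpr hq₁)
  rw [← tsum_logisticKernel_add_int hL h₀ h₁, ← tsum_mul_left]
  refine tsum_congr fun n => ?_
  have hx : Real.log (1 / q) * (Real.log z / Real.log (1 / q) + n) =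
      Real.log (z * (q ^ n)⁻¹) := by
    rw [Real.log_mul hz.ne' (by positivity), Real.log_inv, Real.log_zpow]
    field_simp
    rw [one_div, Real.log_inv]
    ring
  have hpos : 0 < z * (q ^ n)⁻¹ := by positivity
  have hpow : Real.exp (g * Real.log (z * (q ^ n)⁻¹)) = z ^ g * (q ^ (-g)) ^ n := by
    rw [mul_comm, ← Real.rpow_def_of_pos hpos, Real.mul_rpow hz.le (by positivity),
      Real.inv_rpow (by positivity), ← Real.rpow_intCast, ← Real.rpow_intCast,
      ← Real.rpow_mul hq₀.le, ← Real.rpow_mul hq₀.le, ← Real.rpow_neg hq₀.le]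
    ring_nf
  rw [logisticKernel, mul_assoc g, hx, hpow, Real.exp_log hpos, bilateralTerm]
  norm_cast
  have : 0 < z ^ g := by positivity
  rw [mul_zpow, Real.rpow_neg hz.le]
  field_simp
  ring

end Poisson

section HalfDisc

variable {q : ℂ}

lemma half_le_norm_one_sub (hq : ‖q‖ < 1 / 2) : 1 / 2 ≤ ‖1 - q‖ := by
  have := norm_sub_norm_le 1 q
  rw [norm_one] at this
  linarith

lemma one_sub_ne_zero (hq : ‖q‖ < 1 / 2) : 1 - q ≠ 0 :=
  (isUnit_one_sub_of_norm_lt_one (hq.trans one_half_lt_one)).ne_zero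

lemma one_sub_two_mul_ne_zero (hq : ‖q‖ < 1 / 2) : 1 - 2 * q ≠ 0 := by
  have h : ‖2 * q‖ < 1 := by
    rw [norm_mul, Complex.norm_ofNat]
    linarith
  exact (isUnit_one_sub_of_norm_lt_one h).ne_zero

lemma norm_sq_lt (hq : ‖q‖ < 1 / 2) : ‖q ^ 2‖ < 1 / 4 := by
  rw [norm_pow]
  nlinarith [norm_nonneg q]

lemma lt_norm_one_sub_add_sq (hq : ‖q‖ < 1 / 2) : 1 / 4 < ‖1 - q + q ^ 2‖ := by
  have := norm_sub_norm_le (1 - q) (-q ^ 2)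
  rw [norm_neg, sub_neg_eq_add] at this
  linarith [half_le_norm_one_sub hq, norm_sq_lt hq]

lemma one_sub_add_sq_ne_zero (hq : ‖q‖ < 1 / 2) : 1 - q + q ^ 2 ≠ 0 :=
  norm_pos_iff.mp ((by norm_num : (0 : ℝ) < 1 / 4).trans (lt_norm_one_sub_add_sq hq))

lemma vF_eq (hq : ‖q‖ < 1 / 2) : vF q = 1 + q ^ 2 / (1 - q) := by
  have := one_sub_ne_zero hq
  rw [vF]
  field_simp

lemma aF_mul_vF (hq : ‖q‖ < 1 / 2) : aF q * vF q = q ^ 2 / (1 - q) := by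
  have := one_sub_ne_zero hq
  have := one_sub_add_sq_ne_zero hq
  rw [aF, vF]
  field_simp

lemma norm_aF_lt (hq : ‖q‖ < 1 / 2) : ‖aF q‖ < 1 := by
  have h := lt_norm_one_sub_add_sq hq
  rw [aF, norm_div, div_lt_one (by linarith)]
  exact (norm_sq_lt hq).trans h

lemma norm_aF_mul_vF_le (hq : ‖q‖ < 1 / 2) : ‖aF q * vF q‖ ≤ 1 / 2 := by
  have h := half_le_norm_one_sub hq
  rw [aF_mul_vF hq, norm_div, div_le_iff₀ (by linarith)]
  linarith [norm_sq_lt hq]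

lemma norm_vF_le (hq : ‖q‖ < 1 / 2) : ‖vF q‖ ≤ 3 / 2 := by
  have h := norm_aF_mul_vF_le hq
  rw [aF_mul_vF hq] at h
  rw [vF_eq hq]
  refine (norm_add_le _ _).trans ?_
  rw [norm_one]
  linarith

lemma norm_vF_mul_le (hq : ‖q‖ < 1 / 2) : ‖vF q * q‖ ≤ 3 / 4 := by
  rw [norm_mul]
  nlinarith [norm_nonneg q, norm_nonneg (vF q), norm_vF_le hq]

lemma norm_pow_succ_sub_pow_succ_le {R : Type*} [SeminormedRing R] {x y : R} {r : ℝ}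
    (hx : ‖x‖ ≤ r) (hy : ‖y‖ ≤ r) (n : ℕ) :
    ‖x ^ (n + 1) - y ^ (n + 1)‖ ≤ (n + 1) * r ^ n * ‖x - y‖ := by
  induction n with
  | zero => simp
  | succ n ih =>
    have hr : 0 ≤ r := (norm_nonneg x).trans hx
    have hsplit : x ^ (n + 2) - y ^ (n + 2) =
        x * (x ^ (n + 1) - y ^ (n + 1)) + (x - y) * y ^ (n + 1) := by
      rw [pow_succ' x (n + 1), pow_succ' y (n + 1)]
      noncomm_ring
    calc ‖x ^ (n + 2) - y ^ (n + 2)‖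
        ≤ ‖x‖ * ‖x ^ (n + 1) - y ^ (n + 1)‖ + ‖x - y‖ * ‖y‖ ^ (n + 1) := by
          rw [hsplit]
          refine (norm_add_le _ _).trans (add_le_add (norm_mul_le _ _) ?_)
          refine (norm_mul_le _ _).trans ?_
          gcongr
          exact norm_pow_le' y n.succ_pos
      _ ≤ r * ((n + 1) * r ^ n * ‖x - y‖) + ‖x - y‖ * r ^ (n + 1) := by gcongr
      _ = ((n + 1 : ℕ) + 1) * r ^ (n + 1) * ‖x - y‖ := by
          push_cast
          ring

lemma norm_pow_sub_pow_le_of_norm_le_half {x y : ℂ} (hx : ‖x‖ ≤ 1 / 2) (hy : ‖y‖ ≤ 1 / 2) (n : ℕ) :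
    ‖x ^ (n + 2) - y ^ (n + 2)‖ ≤ ‖x - y‖ := by
  refine (norm_pow_succ_sub_pow_succ_le hx hy (n + 1)).trans
    (mul_le_of_le_one_left (norm_nonneg _) ?_)
  rw [one_div, inv_pow, ← div_eq_mul_inv, div_le_one (by positivity)]
  exact_mod_cast Nat.lt_two_pow_self (n := n + 1)

-- Comparing the value at `q` with its complex conjugate.
lemma abs_im_le_norm_one_sub_two_mul_add_pow (hq : ‖q‖ < 1 / 2) (n : ℕ) :
    |q.im| ≤ ‖1 - 2 * q + q ^ (n + 2)‖ := by
  set g := 1 - 2 * q + q ^ (n + 2) with hg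
  have hconj : 2 * (q - star q) = q ^ (n + 2) - star q ^ (n + 2) - (g - star g) := by
    simp only [hg, star_add, star_sub, star_mul, star_pow, star_one, star_ofNat]
    ring
  have hnorm (z : ℂ) : ‖z - star z‖ = 2 * |z.im| := by
    rw [Complex.star_def, Complex.sub_conj]
    simp
  have hpow := norm_pow_sub_pow_le_of_norm_le_half hq.le
    ((norm_star q).trans_le hq.le) n
  have h := congrArg norm hconj
  rw [norm_mul, Complex.norm_ofNat] at h
  have := norm_sub_le (q ^ (n + 2) - star q ^ (n + 2)) (g - star g)
  rw [hnorm] at *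
  linarith [Complex.abs_im_le_norm g, hnorm g]

lemma one_sub_two_mul_abs_le (n : ℕ) {x : ℝ} (hx : |x| ≤ 1) :
    1 - 2 * |x| ≤ 1 - 2 * x + x ^ (n + 2) := by
  rcases le_or_gt 0 x with h | h
  · rw [abs_of_nonneg h]
    linarith [pow_nonneg h (n + 2)]
  · have hpow : |x ^ (n + 2)| ≤ |x| := by
      rw [abs_pow]
      exact pow_le_of_le_one (abs_nonneg x) hx (by positivity)
    linarith [neg_abs_le (x ^ (n + 2)), abs_of_neg h]

lemma one_sub_two_mul_norm_le (hq : ‖q‖ < 1 / 2) (n : ℕ) :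
    (1 - 2 * ‖q‖) / 4 ≤ ‖1 - 2 * q + q ^ (n + 2)‖ := by
  set x : ℂ := (q.re : ℂ) with hx
  have hre : |q.re| ≤ ‖q‖ := Complex.abs_re_le_norm q
  have hreal : 1 - 2 * ‖q‖ ≤ ‖1 - 2 * x + x ^ (n + 2)‖ := by
    have h := Complex.re_le_norm (1 - 2 * x + x ^ (n + 2))
    have hcast : 1 - 2 * x + x ^ (n + 2) = ((1 - 2 * q.re + q.re ^ (n + 2) : ℝ) : ℂ) := by
      rw [hx]
      push_cast
      rfl
    rw [hcast, Complex.ofReal_re, ← hcast] at h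
    linarith [one_sub_two_mul_abs_le n (hre.trans (by linarith))]
  have him : ‖q - x‖ = |q.im| := by
    rw [sub_eq_of_eq_add' (Complex.re_add_im q).symm]
    simp
  have hpow := norm_pow_sub_pow_le_of_norm_le_half
    ((Complex.norm_real q.re).trans_le (hre.trans hq.le)) hq.le n
  have hdiff : ‖1 - 2 * x + x ^ (n + 2)‖ ≤ ‖1 - 2 * q + q ^ (n + 2)‖ + 3 * |q.im| := by
    have hsplit : 1 - 2 * x + x ^ (n + 2) =
        1 - 2 * q + q ^ (n + 2) + (2 * (q - x) + (x ^ (n + 2) - q ^ (n + 2))) := by ring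
    have h₁ := norm_add_le (1 - 2 * q + q ^ (n + 2)) (2 * (q - x) + (x ^ (n + 2) - q ^ (n + 2)))
    have h₂ := norm_add_le (2 * (q - x)) (x ^ (n + 2) - q ^ (n + 2))
    rw [norm_mul, Complex.norm_ofNat] at h₂
    rw [norm_sub_rev x, him] at hpow
    rw [hsplit]
    linarith
  linarith [abs_im_le_norm_one_sub_two_mul_add_pow hq n]

end HalfDisc

section Continuation

lemma differentiableOn_qPF {g : ℂ → ℂ} {s : Set ℂ} (hg : DifferentiableOn ℂ g s) (n : ℕ) :
    DifferentiableOn ℂ (fun q => qPF (g q) q n) s :=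
  DifferentiableOn.fun_finsetProd fun i _ => by fun_prop

lemma differentiableOn_qPI {g : ℂ → ℂ} {s : Set ℂ} {r B : ℝ} (hs : IsOpen s) (hr : r < 1)
    (hsr : ∀ q ∈ s, ‖q‖ ≤ r) (hg : DifferentiableOn ℂ g s) (hgB : ∀ q ∈ s, ‖g q‖ ≤ B) :
    DifferentiableOn ℂ (fun q => qPI (g q) q) s := by
  rcases s.eq_empty_or_nonempty with rfl | ⟨q₀, hq₀⟩
  · exact differentiableOn_empty
  have hr₀ : 0 ≤ r := (norm_nonneg q₀).trans (hsr q₀ hq₀)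
  have hB : 0 ≤ B := (norm_nonneg _).trans (hgB q₀ hq₀)
  have hterm (n : ℕ) : DifferentiableOn ℂ (fun q => -(g q * q ^ n)) s := by fun_prop
  have hprod := Summable.hasProdLocallyUniformlyOn_nat_one_add hs
    ((summable_geometric_of_lt_one hr₀ hr).mul_left B)
    (.of_forall fun n q hq => by
      rw [norm_neg, norm_mul, norm_pow]
      gcongr
      exacts [hgB q hq, hsr q hq])
    fun n => (hterm n).continuousOn
  simpa only [qPI, sub_eq_add_neg] using
    (hasProdLocallyUniformlyOn_iff_tendstoLocallyUniformlyOn.mp hprod).differentiableOn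
      (.of_forall fun t => DifferentiableOn.fun_finsetProd fun i _ => (hterm i).const_add 1) hs

/-- The `n`-th term of the partial fraction form of the series defining `PA`; its poles are the
zeros of `1 - 2q + qⁿ⁺²`. -/
def contTerm (q : ℂ) (n : ℕ) : ℂ :=
  qPF (aF q) q n / qPF q q n * (vF q * q) ^ n / (1 - 2 * q + q ^ (n + 2))

/-- The analytic continuation of `PA` to the disc `‖q‖ < 1 / 2`: the defining series after Heine's
transformation. -/
def PAcont (q : ℂ) : ℂ :=
  CF q - q ^ 2 * AF q * (qPI (vF q) q / qPI (aF q * vF q) q) * ∑' n, contTerm q n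

lemma exists_norm_qPF_aF_div_le :
    ∃ M, 0 < M ∧ ∀ q : ℂ, ‖q‖ < 1 / 2 → ∀ n, ‖qPF (aF q) q n / qPF q q n‖ ≤ M :=
  ⟨_, Real.exp_pos _, fun _ hq => norm_qPF_div_le (r := 1 / 2) (ρ := 1 / 2) (by norm_num)
    (by norm_num) hq.le (norm_aF_lt hq).le hq.le⟩

lemma exists_norm_contTerm_le : ∃ M, 0 < M ∧ ∀ {q : ℂ}, ‖q‖ < 1 / 2 → ∀ n,
    ‖contTerm q n‖ ≤ M / (1 - 2 * ‖q‖) * (3 / 4) ^ n := by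
  obtain ⟨M, hM, hbound⟩ := exists_norm_qPF_aF_div_le
  refine ⟨4 * M, by positivity, fun {q} hq n => ?_⟩
  have hpos : 0 < (1 - 2 * ‖q‖) / 4 := by linarith
  rw [contTerm, norm_div, norm_mul, norm_pow]
  calc ‖qPF (aF q) q n / qPF q q n‖ * ‖vF q * q‖ ^ n / ‖1 - 2 * q + q ^ (n + 2)‖
      ≤ M * (3 / 4) ^ n / ((1 - 2 * ‖q‖) / 4) := by
        gcongr
        exacts [hbound q hq n, norm_vF_mul_le hq, one_sub_two_mul_norm_le hq n]
    _ = 4 * M / (1 - 2 * ‖q‖) * (3 / 4) ^ n := by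
        rw [div_div_eq_mul_div]
        ring

lemma one_sub_two_mul_add_pow_ne_zero {q : ℂ} (hq : ‖q‖ < 1 / 2) (n : ℕ) :
    1 - 2 * q + q ^ (n + 2) ≠ 0 :=
  norm_pos_iff.mp (lt_of_lt_of_le (by linarith) (one_sub_two_mul_norm_le hq n))

lemma summable_norm_contTerm {q : ℂ} (hq : ‖q‖ < 1 / 2) : Summable fun n => ‖contTerm q n‖ := by
  obtain ⟨M, -, hM⟩ := exists_norm_contTerm_le
  exact ((summable_geometric_of_lt_one (by norm_num) (by norm_num)).mul_left _).of_nonneg_of_le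
    (fun _ => norm_nonneg _) (hM hq)

lemma differentiableOn_vF : DifferentiableOn ℂ vF (Metric.ball 0 (1 / 2)) :=
  DifferentiableOn.div (by fun_prop) (by fun_prop) fun _ hq =>
    one_sub_ne_zero (mem_ball_zero_iff.mp hq)

lemma differentiableOn_aF : DifferentiableOn ℂ aF (Metric.ball 0 (1 / 2)) :=
  DifferentiableOn.div (by fun_prop) (by fun_prop) fun _ hq =>
    one_sub_add_sq_ne_zero (mem_ball_zero_iff.mp hq)

lemma differentiableOn_AF : DifferentiableOn ℂ AF (Metric.ball 0 (1 / 2)) :=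
  DifferentiableOn.div (by fun_prop) (by fun_prop) fun _ hq =>
    pow_ne_zero _ (one_sub_two_mul_ne_zero (mem_ball_zero_iff.mp hq))

lemma differentiableOn_CF : DifferentiableOn ℂ CF (Metric.ball 0 (1 / 2)) :=
  DifferentiableOn.div (by fun_prop) (by fun_prop) fun _ hq =>
    mul_ne_zero (one_sub_ne_zero (mem_ball_zero_iff.mp hq))
      (pow_ne_zero _ (one_sub_two_mul_ne_zero (mem_ball_zero_iff.mp hq)))

lemma differentiableOn_qPI_vF_div :
    DifferentiableOn ℂ (fun q => qPI (vF q) q / qPI (aF q * vF q) q) (Metric.ball 0 (1 / 2)) := by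
  have hball : ∀ q ∈ Metric.ball (0 : ℂ) (1 / 2), ‖q‖ < 1 / 2 := fun _ => mem_ball_zero_iff.mp
  refine DifferentiableOn.div ?_ ?_ fun q hq => qPI_ne_zero ((hball q hq).trans one_half_lt_one)
    ((norm_aF_mul_vF_le (hball q hq)).trans_lt one_half_lt_one)
  · exact differentiableOn_qPI Metric.isOpen_ball one_half_lt_one (fun q hq => (hball q hq).le)
      differentiableOn_vF fun q hq => norm_vF_le (hball q hq)
  · exact differentiableOn_qPI Metric.isOpen_ball one_half_lt_one (fun q hq => (hball q hq).le)
      (differentiableOn_aF.mul differentiableOn_vF) fun q hq => norm_aF_mul_vF_le (hball q hq)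

lemma differentiableOn_contTerm (n : ℕ) :
    DifferentiableOn ℂ (contTerm · n) (Metric.ball 0 (1 / 2)) := by
  refine DifferentiableOn.div (DifferentiableOn.mul (DifferentiableOn.div
    (differentiableOn_qPF differentiableOn_aF n) (differentiableOn_qPF differentiableOn_id n) ?_)
    ((differentiableOn_vF.mul differentiableOn_id).pow n)) (by fun_prop) ?_ <;> intro q hq
  · have hq₁ : ‖q‖ < 1 := (mem_ball_zero_iff.mp hq).trans one_half_lt_one
    exact qPF_ne_zero hq₁ hq₁ n
  · exact one_sub_two_mul_add_pow_ne_zero (mem_ball_zero_iff.mp hq) n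

lemma differentiableOn_tsum_contTerm {r : ℝ} (hr : r < 1 / 2) :
    DifferentiableOn ℂ (fun q => ∑' n, contTerm q n) (Metric.ball 0 r) := by
  obtain ⟨M, hM₀, hM⟩ := exists_norm_contTerm_le
  have hsub := Metric.ball_subset_ball hr.le (x := (0 : ℂ))
  refine Complex.differentiableOn_tsum_of_summable_norm
    (u := fun n => M / (1 - 2 * r) * (3 / 4) ^ n)
    ((summable_geometric_of_lt_one (by norm_num) (by norm_num)).mul_left _)
    (fun n => (differentiableOn_contTerm n).mono hsub) Metric.isOpen_ball fun n q hq => ?_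
  refine (hM (mem_ball_zero_iff.mp (hsub hq)) n).trans ?_
  have hr' : 0 < 1 - 2 * r := by linarith
  gcongr
  exact (mem_ball_zero_iff.mp hq).le

lemma analyticOnNhd_PAcont : AnalyticOnNhd ℂ PAcont (Metric.ball 0 (1 / 2)) := by
  intro z hz
  obtain ⟨r, hzr, hr⟩ := exists_between (mem_ball_zero_iff.mp hz)
  have hsub := Metric.ball_subset_ball hr.le (x := (0 : ℂ))
  have hpre : DifferentiableOn ℂ (fun q : ℂ => q ^ 2) (Metric.ball 0 r) := by fun_prop
  have hdiff : DifferentiableOn ℂ PAcont (Metric.ball 0 r) :=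
    (differentiableOn_CF.mono hsub).sub (((hpre.mul (differentiableOn_AF.mono hsub)).mul
      (differentiableOn_qPI_vF_div.mono hsub)).mul (differentiableOn_tsum_contTerm hr))
  exact hdiff.analyticAt (Metric.isOpen_ball.mem_nhds (mem_ball_zero_iff.mpr hzr))

end Continuation

section PowerSeries

variable {q : ℂ}

lemma one_sub_sub_pow_eq (hq : ‖q‖ < 1 / 2) (m : ℕ) :
    1 - q - q ^ (m + 2) = (1 - q) * (1 - aF q * vF q * q ^ m) := by
  have := one_sub_ne_zero hq
  rw [aF_mul_vF hq]
  field_simp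
  ring

lemma prod_PA_factors (hq : ‖q‖ < 1 / 2) (m : ℕ) :
    ∏ k ∈ Finset.Icc 1 m,
      ((1 - q - q ^ k + q ^ (k + 1) - q ^ (k + 2)) / (1 - q - q ^ (k + 1))) =
    qPF (vF q * q) q m / qPF (aF q * vF q) q m := by
  have hne := one_sub_ne_zero hq
  induction m with
  | zero => simp [qPF_zero]
  | succ m ih =>
    have hnum : 1 - q - q ^ (m + 1) + q ^ (m + 1 + 1) - q ^ (m + 1 + 2) =
        (1 - q) * (1 - vF q * q * q ^ m) := by
      rw [vF]
      field_simp
      ring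
    rw [Finset.prod_Icc_succ_top (by simp), ih, qPF_succ, qPF_succ, mul_div_mul_comm, hnum,
      one_sub_sub_pow_eq hq, mul_div_mul_left _ _ hne]

lemma PAterm_succ (hq : ‖q‖ < 1 / 2) (m : ℕ) :
    PAterm q (m + 1) = -q ^ 2 / (1 - 2 * q) / ((1 - q) * (1 - aF q * vF q)) *
      (qPF (vF q * q) q m / qPF (aF q * (vF q * q)) q m * (-q ^ 2 / (1 - 2 * q)) ^ m) := by
  have := one_sub_ne_zero hq
  have := one_sub_two_mul_ne_zero hq
  have hshift : qPF (aF q * vF q) q m * (1 - aF q * vF q * q ^ m) =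
      (1 - aF q * vF q) * qPF (aF q * (vF q * q)) q m := by
    rw [← qPF_succ, qPF_succ', mul_assoc]
  have hpow : (-1) ^ (m + 1) * q ^ (2 * (m + 1)) / (1 - 2 * q) ^ (m + 1) =
      -q ^ 2 / (1 - 2 * q) * (-q ^ 2 / (1 - 2 * q)) ^ m := by
    rw [← pow_succ', div_pow, neg_pow (q ^ 2), pow_mul]
  rw [PAterm, Nat.add_sub_cancel, prod_PA_factors hq, one_sub_sub_pow_eq hq, ← div_div, hpow,
    div_mul_div_comm, mul_assoc (1 - q), mul_comm (1 - aF q * vF q * q ^ m), hshift]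
  field_simp

lemma norm_neg_sq_div_lt_one (hq : ‖q‖ < 1 / 2) (h : ‖q ^ 2‖ < ‖1 - 2 * q‖) :
    ‖-q ^ 2 / (1 - 2 * q)‖ < 1 := by
  rwa [norm_div, norm_neg, div_lt_one (norm_pos_iff.mpr (one_sub_two_mul_ne_zero hq))]

lemma norm_aF_mul_vF_mul_lt (hq : ‖q‖ < 1 / 2) : ‖aF q * (vF q * q)‖ < 1 := by
  rw [norm_mul]
  exact mul_lt_one_of_nonneg_of_lt_one_left (norm_nonneg _) (norm_aF_lt hq)
    ((norm_vF_mul_le hq).trans (by norm_num))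

lemma summable_norm_PAterm (hq : ‖q‖ < 1 / 2) (h : ‖q ^ 2‖ < ‖1 - 2 * q‖) :
    Summable fun m => ‖PAterm q (m + 1)‖ := by
  have hq₁ := hq.trans one_half_lt_one
  simp only [PAterm_succ hq, norm_mul _ (_ * _)]
  exact (summable_norm_qHyp _ hq₁ (norm_aF_mul_vF_mul_lt hq)
    (norm_neg_sq_div_lt_one hq h)).mul_left _

lemma tsum_PAterm (hq : ‖q‖ < 1 / 2) (h : ‖q ^ 2‖ < ‖1 - 2 * q‖) :
    ∑' m, PAterm q (m + 1) = qPI (vF q) q / qPI (aF q * vF q) q * ∑' n, contTerm q n := by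
  have hq₁ := hq.trans one_half_lt_one
  have hne := one_sub_ne_zero hq
  have hne' := one_sub_two_mul_ne_zero hq
  have hvq : ‖vF q * q‖ < 1 := (norm_vF_mul_le hq).trans_lt (by norm_num)
  have hav := norm_aF_mul_vF_mul_lt hq
  have hqPI := qPI_ne_zero hq₁ hav
  have hterm (n : ℕ) : qPF (aF q) q n / qPF q q n * (vF q * q) ^ n /
      (1 - -q ^ 2 / (1 - 2 * q) * q ^ n) = (1 - 2 * q) * contTerm q n := by
    have hden : 1 - -q ^ 2 / (1 - 2 * q) * q ^ n = (1 - 2 * q + q ^ (n + 2)) / (1 - 2 * q) := by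
      generalize 1 - 2 * q = t at hne' ⊢
      field_simp
      ring
    rw [hden, div_div_eq_mul_div, contTerm]
    ring
  have hheine := qPI_div_mul_qHyp hq₁ hvq hav (norm_neg_sq_div_lt_one hq h)
  simp only [hterm, tsum_mul_left] at hheine
  have hvF : 1 - vF q = -q ^ 2 / (1 - q) := by
    rw [vF_eq hq]
    ring
  have hsum : qHyp (vF q * q) (aF q * (vF q * q)) q (-q ^ 2 / (1 - 2 * q)) =
      qPI (vF q * q) q / qPI (aF q * (vF q * q)) q * ((1 - 2 * q) * ∑' n, contTerm q n) := by
    rw [← hheine, ← mul_assoc (_ / _), div_mul_div_cancel₀ hqPI,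
      div_self (qPI_ne_zero hq₁ hvq), one_mul]
  rw [← one_sub_mul_qPI hq₁ (vF q), ← one_sub_mul_qPI hq₁ (aF q * vF q), mul_assoc (aF q) (vF q) q,
    hvF]
  simp only [PAterm_succ hq, tsum_mul_left]
  rw [← qHyp, hsum]
  generalize 1 - 2 * q = t at hne' ⊢
  field_simp

theorem PAcont_eq_PAseries (hq : ‖q‖ < 1 / 2) (h : ‖q ^ 2‖ < ‖1 - 2 * q‖) :
    PAcont q = PAseries q := by
  rw [PAcont, PAseries, tsum_PAterm hq h, CF, AF, mul_comm (1 - q) ((1 - 2 * q) ^ 2)]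
  ring

end PowerSeries

section DoubleSeries

variable {q : ℂ}

lemma qPF_mul_zpow_neg {x : ℂ} (hx : x ≠ 0) (hq : q ≠ 0) (j : ℕ) :
    qPF (x * q ^ (-(j : ℤ))) q j =
      x ^ j * qPF (x⁻¹ * q) q j * ∏ i ∈ Finset.range j, -(q ^ (i + 1))⁻¹ := by
  have hconst : x ^ j = ∏ _ ∈ Finset.range j, x := by simp
  rw [qPF, ← Finset.prod_range_reflect, qPF, hconst, ← Finset.prod_mul_distrib,
    ← Finset.prod_mul_distrib]
  refine Finset.prod_congr rfl fun i hi => ?_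
  have hi' : i < j := Finset.mem_range.mp hi
  have hpow : q ^ (-(j : ℤ)) * q ^ (j - 1 - i) = (q ^ (i + 1))⁻¹ := by
    rw [← zpow_natCast, ← zpow_natCast, ← zpow_add₀ hq, ← zpow_neg]
    congr 1
    omega
  rw [mul_assoc x, hpow]
  field_simp
  ring

lemma qPF_mul_zpow_neg_div {x : ℂ} (hx : x ≠ 0) (hq : q ≠ 0) (j : ℕ) :
    qPF (x * q ^ (-(j : ℤ))) q j / qPF (q ^ (-(j : ℤ))) q j =
      x ^ j * (qPF (x⁻¹ * q) q j / qPF q q j) := by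
  have hprod : ∏ i ∈ Finset.range j, -(q ^ (i + 1))⁻¹ ≠ 0 :=
    Finset.prod_ne_zero_iff.mpr fun i _ => neg_ne_zero.mpr (inv_ne_zero (pow_ne_zero _ hq))
  have hone := qPF_mul_zpow_neg one_ne_zero hq j
  simp only [one_mul, one_pow, inv_one] at hone
  rw [hone, qPF_mul_zpow_neg hx hq, mul_div_mul_right _ _ hprod, mul_div_assoc]

lemma aF_ne_zero (hq : ‖q‖ < 1 / 2) (hq₀ : q ≠ 0) : aF q ≠ 0 :=
  div_ne_zero (pow_ne_zero 2 hq₀) (one_sub_add_sq_ne_zero hq)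

lemma Tterm_eq (hq : ‖q‖ < 1 / 2) (hq₀ : q ≠ 0) (ν j : ℕ) :
    Tterm q ν j = (vF q * q) ^ ν / (1 - 2 * q + q ^ (ν + 2)) *
      (qPF ((aF q)⁻¹ * q) q j / qPF q q j * (aF q * q ^ ν) ^ j) := by
  rw [Tterm, qPF_mul_zpow_neg_div (aF_ne_zero hq hq₀) hq₀]
  ring

lemma norm_aF_mul_pow_lt_one (hq : ‖q‖ < 1 / 2) (ν : ℕ) : ‖aF q * q ^ ν‖ < 1 :=
  norm_mul_pow_lt_one (hq.trans one_half_lt_one) (norm_aF_lt hq) ν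

lemma tsum_Tterm_right (hq : ‖q‖ < 1 / 2) (hq₀ : q ≠ 0) (ν : ℕ) :
    ∑' j, Tterm q ν j = qPI q q / qPI (aF q) q * contTerm q ν := by
  have hq₁ := hq.trans one_half_lt_one
  simp only [Tterm_eq hq hq₀, tsum_mul_left]
  rw [← qHyp, qHyp_self _ hq₁ (norm_aF_mul_pow_lt_one hq ν), mul_assoc (aF q)⁻¹,
    mul_left_comm q, inv_mul_cancel_left₀ (aF_ne_zero hq hq₀),
    qPI_mul_pow_div hq₁ hq₁ (norm_aF_lt hq), contTerm]
  ring

lemma summable_norm_Tterm (hq : ‖q‖ < 1 / 2) (hq₀ : q ≠ 0) :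
    Summable fun p : ℕ × ℕ => ‖Tterm q (p.1 + 1) p.2‖ := by
  have hq₁ := hq.trans one_half_lt_one
  have hden : 0 < (1 - 2 * ‖q‖) / 4 := by linarith
  have hgeom : Summable fun ν : ℕ => (3 / 4 : ℝ) ^ (ν + 1) / ((1 - 2 * ‖q‖) / 4) :=
    ((summable_nat_add_iff 1).mpr
      (summable_geometric_of_lt_one (by norm_num) (by norm_num))).div_const _
  refine (hgeom.mul_of_nonneg
    (summable_norm_qHyp ((aF q)⁻¹ * q) hq₁ hq₁ (norm_aF_lt hq)) (fun _ => by positivity)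
    fun _ => norm_nonneg _).of_nonneg_of_le (fun _ => norm_nonneg _) ?_
  rintro ⟨ν, j⟩
  rw [Tterm_eq hq hq₀, norm_mul, norm_div, norm_pow, norm_mul (_ / _) (_ ^ _), norm_pow,
    norm_mul (_ / _) (_ ^ _), norm_pow]
  gcongr
  · exact norm_vF_mul_le hq
  · exact one_sub_two_mul_norm_le hq _
  · rw [norm_mul, norm_pow]
    exact mul_le_of_le_one_right (norm_nonneg _) (pow_le_one₀ (norm_nonneg _) hq₁.le)

lemma tsum_Tterm (hq : ‖q‖ < 1 / 2) (hq₀ : q ≠ 0) :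
    ∑' p : ℕ × ℕ, Tterm q (p.1 + 1) p.2 =
      qPI q q / qPI (aF q) q * (∑' n, contTerm q n - 1 / (1 - q) ^ 2) := by
  have hzero : contTerm q 0 = 1 / (1 - q) ^ 2 := by
    rw [contTerm, qPF_zero, qPF_zero]
    ring
  rw [(summable_norm_Tterm hq hq₀).of_norm.tsum_prod,
    (summable_norm_contTerm hq).of_norm.tsum_eq_zero_add, hzero, add_sub_cancel_left]
  simp only [tsum_Tterm_right hq hq₀, tsum_mul_left]

theorem PAcont_eq_DF_sub (hq : ‖q‖ < 1 / 2) (hq₀ : q ≠ 0) :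
    PAcont q = DF q - q ^ 2 * AF q *
      (qPI (aF q) q * qPI (vF q) q / (qPI q q * qPI (aF q * vF q) q)) *
      ∑' p : ℕ × ℕ, Tterm q (p.1 + 1) p.2 := by
  have hq₁ := hq.trans one_half_lt_one
  have := qPI_ne_zero hq₁ (norm_aF_lt hq)
  have := qPI_ne_zero hq₁ hq₁
  have := qPI_ne_zero hq₁ ((norm_aF_mul_vF_le hq).trans_lt one_half_lt_one)
  have := one_sub_ne_zero hq
  rw [tsum_Tterm hq hq₀, PAcont, DF]
  field_simp
  ring

end DoubleSeries

section RealParameter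

lemma aF_ofReal (q : ℝ) : aF (q : ℂ) = (aR q : ℂ) := by simp [aF, aR]

lemma vF_ofReal (q : ℝ) : vF (q : ℂ) = (vR q : ℂ) := by simp [vF, vR]

variable {q : ℝ}

lemma norm_ofReal_lt_half (hq₀ : 0 < q) (hq : q < 1 / 2) : ‖(q : ℂ)‖ < 1 / 2 := by
  rwa [Complex.norm_of_nonneg hq₀.le]

lemma one_lt_vR (hq₀ : 0 < q) (hq₁ : q < 1) : 1 < vR q := by
  rw [vR, lt_div_iff₀ (by linarith)]
  nlinarith

lemma one_lt_norm_vF (hq₀ : 0 < q) (hq₁ : q < 1) : 1 < ‖vF (q : ℂ)‖ := by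
  have hv := one_lt_vR hq₀ hq₁
  rwa [vF_ofReal, Complex.norm_of_nonneg (by linarith)]

lemma log_one_div_pos (hq₀ : 0 < q) (hq₁ : q < 1) : 0 < Real.log (1 / q) :=
  Real.log_pos ((one_lt_div hq₀).mpr hq₁)

lemma gammaR_pos (hq₀ : 0 < q) (hq₁ : q < 1) : 0 < gammaR q :=
  div_pos (Real.log_pos (one_lt_vR hq₀ hq₁)) (log_one_div_pos hq₀ hq₁)

lemma gammaR_lt_one (hq₀ : 0 < q) (hq : q < 1 / 2) : gammaR q < 1 := by
  have hq₁ := hq.trans one_half_lt_one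
  rw [gammaR, div_lt_one (log_one_div_pos hq₀ hq₁)]
  refine Real.log_lt_log (by linarith [one_lt_vR hq₀ hq₁]) ?_
  rw [vR, div_lt_div_iff₀ (by linarith) hq₀]
  nlinarith [mul_pos hq₀ hq₀]

lemma rpow_neg_gammaR (hq₀ : 0 < q) (hq₁ : q < 1) : q ^ (-gammaR q) = vR q := by
  rw [Real.rpow_neg hq₀.le, ← Real.inv_rpow hq₀.le, ← one_div]
  exact Real.rpow_logb (by positivity) ((one_lt_div hq₀).mpr hq₁).ne'
    (one_pos.trans (one_lt_vR hq₀ hq₁))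

lemma summable_norm_PiR_terms (hq₀ : 0 < q) (hq₁ : q < 1) (w : ℝ) :
    Summable fun k : ℤ => ‖pcoefR q k * Complex.exp (-2 * Real.pi * I * k * w)‖ := by
  refine (summable_norm_logisticCoeff (gammaR q) (log_one_div_pos hq₀ hq₁).ne').congr fun k => ?_
  have hexp : -2 * Real.pi * I * k * w = ((-2 * Real.pi * k * w : ℝ) : ℂ) * I := by
    push_cast
    ring
  rw [norm_mul, hexp, Complex.norm_exp_ofReal_mul_I, mul_one]
  rfl

lemma PiR_add_nat (q w : ℝ) (n : ℕ) : PiR q (w + n) = PiR q w := by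
  refine tsum_congr fun k => ?_
  have hexp : -2 * Real.pi * I * k * ((w + n : ℝ) : ℂ) =
      -2 * Real.pi * I * k * w + ((-k * n : ℤ) : ℂ) * (2 * Real.pi * I) := by
    push_cast
    ring
  rw [hexp, Complex.exp_add, Complex.exp_int_mul_two_pi_mul_I, mul_one]

lemma log_div_sq_div_log_one_div (hq₀ : 0 < q) (hq : q < 1 / 2) :
    Real.log ((1 - 2 * q) / q ^ 2) / Real.log (1 / q) =
      Real.log (1 - 2 * q) / Real.log (1 / q) + (2 : ℕ) := by
  have hlog := log_one_div_pos hq₀ (hq.trans one_half_lt_one)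
  rw [div_eq_mul_one_div (1 - 2 * q), ← one_div_pow, Real.log_mul (by linarith) (by positivity),
    Real.log_pow, add_div, mul_div_cancel_right₀ _ hlog.ne']

lemma tsum_contTerm (hq₀ : q ≠ 0) :
    ∑' n, contTerm (q : ℂ) n =
      1 / (q : ℂ) ^ 2 * qPartialFraction (aF q) (vF q) q ((1 - 2 * q) / q ^ 2 : ℝ) := by
  rw [qPartialFraction, ← tsum_mul_left]
  refine tsum_congr fun n => ?_
  have hden : 1 - 2 * (q : ℂ) + (q : ℂ) ^ (n + 2) =
      (q : ℂ) ^ 2 * (((1 - 2 * q) / q ^ 2 : ℝ) + (q : ℂ) ^ n) := by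
    have hq : (q : ℂ) ≠ 0 := Complex.ofReal_ne_zero.mpr hq₀
    push_cast
    rw [mul_add, mul_div_cancel₀ _ (pow_ne_zero 2 hq)]
    ring
  rw [contTerm, hden, div_mul_div_comm, one_mul]

lemma norm_aF_mul_lt_one (hq₀ : 0 < q) (hq : q < 1 / 2) :
    ‖aF (q : ℂ) * ((1 - 2 * q) / q ^ 2 : ℝ)‖ < 1 := by
  have hmul : aR q * ((1 - 2 * q) / q ^ 2) = (1 - 2 * q) / (1 - q + q ^ 2) := by
    rw [aR]
    field_simp
  have hpos : 0 < 1 - q + q ^ 2 := by nlinarith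
  rw [aF_ofReal, ← Complex.ofReal_mul, hmul, Complex.norm_of_nonneg
    (div_nonneg (by linarith) hpos.le), div_lt_one hpos]
  nlinarith

lemma Vterm_eq (q : ℝ) (r : ℕ) :
    Vterm q r = qPF ((aF q)⁻¹ * (vF q)⁻¹ * q) (q : ℂ) r / qPF ((vF q)⁻¹ * q) (q : ℂ) r *
      (-(aF q * ((1 - 2 * q) / q ^ 2 : ℝ))) ^ r := by
  rw [Vterm]
  congr 2
  push_cast
  ring

lemma summable_norm_Vterm (hq₀ : 0 < q) (hq : q < 1 / 2) : Summable fun r => ‖Vterm q r‖ := by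
  have hq₁ := (norm_ofReal_lt_half hq₀ hq).trans one_half_lt_one
  simp only [Vterm_eq]
  exact summable_norm_qHyp _ hq₁
    (norm_inv_mul_lt_one hq₁ (one_lt_norm_vF hq₀ (hq.trans one_half_lt_one)))
    ((norm_neg _).trans_lt (norm_aF_mul_lt_one hq₀ hq))

lemma Vfun_eq (hq₀ : q ≠ 0) :
    Vfun q = qPI (q : ℂ) q / qPI (aF q) q *
      (1 / (q : ℂ) ^ 2 * qRegularPart (aF q) (vF q) q ((1 - 2 * q) / q ^ 2 : ℝ) -
        1 / (1 - (q : ℂ)) ^ 2) := by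
  have hden : 1 / (q : ℂ) ^ 2 / (1 + (1 - 2 * (q : ℂ)) / (q : ℂ) ^ 2) = 1 / (1 - (q : ℂ)) ^ 2 := by
    have hq : (q : ℂ) ^ 2 ≠ 0 := pow_ne_zero 2 (Complex.ofReal_ne_zero.mpr hq₀)
    rw [div_div, mul_add, mul_one, mul_div_cancel₀ _ hq]
    ring
  rw [Vfun, hden, qRegularPart, qHyp]
  simp only [Vterm_eq, mul_div_mul_comm]
  ring

lemma rpow_neg_gammaR_prefactor (hq₀ : 0 < q) (hq : q < 1 / 2) :
    1 / q ^ 2 * ((1 - 2 * q) / q ^ 2) ^ (-gammaR q) =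
      (1 - 2 * q) ^ (-gammaR q) * (vR q * q ^ (3 * gammaR q - 2)) := by
  have hpow : (q ^ 2) ^ (-gammaR q) = (q ^ (2 * gammaR q))⁻¹ := by
    rw [← Real.rpow_natCast, ← Real.rpow_mul hq₀.le, ← Real.rpow_neg hq₀.le, Nat.cast_ofNat,
      mul_neg]
  have hvq : vR q * q ^ (3 * gammaR q - 2) = q ^ (2 * gammaR q) / q ^ 2 := by
    rw [← rpow_neg_gammaR hq₀ (hq.trans one_half_lt_one), ← Real.rpow_add hq₀,
      ← Real.rpow_natCast q 2, ← Real.rpow_sub hq₀, Nat.cast_ofNat]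
    ring_nf
  rw [hvq, Real.div_rpow (by linarith) (by positivity), hpow, div_inv_eq_mul]
  ring

lemma bilateralTerm_part_eq_PiR_mul_Ufun (hq₀ : 0 < q) (hq : q < 1 / 2) :
    1 / (q : ℂ) ^ 2 * (qPI (-(q * ((1 - 2 * q) / q ^ 2 : ℝ))) q /
        qPI (-(aF q * ((1 - 2 * q) / q ^ 2 : ℝ))) q *
        ∑' k, bilateralTerm (vF q) q ((1 - 2 * q) / q ^ 2 : ℝ) k) =
      ((1 - 2 * q) ^ (-gammaR q) : ℝ) * PiR q (Real.log (1 - 2 * q) / Real.log (1 / q)) *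
        Ufun q := by
  have hq₁ := hq.trans one_half_lt_one
  have hz : 0 < (1 - 2 * q) / q ^ 2 := div_pos (by linarith) (by positivity)
  have hqz : (q : ℂ) * ((1 - 2 * q) / q ^ 2 : ℝ) = ((1 - 2 * q) / q : ℝ) := by
    rw [← Complex.ofReal_mul]
    congr 1
    field_simp
  have haz : aF (q : ℂ) * ((1 - 2 * q) / q ^ 2 : ℝ) = (aR q * (1 - 2 * q) / q ^ 2 : ℝ) := by
    rw [aF_ofReal, ← Complex.ofReal_mul, mul_div_assoc]
  have hpre : 1 / (q : ℂ) ^ 2 * (((1 - 2 * q) / q ^ 2) ^ (-gammaR q) : ℝ) =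
      ((1 - 2 * q) ^ (-gammaR q) : ℝ) * (vR q * q ^ (3 * gammaR q - 2) : ℝ) := by
    exact_mod_cast rpow_neg_gammaR_prefactor hq₀ hq
  have hsum : ∑' k, bilateralTerm (vF q) q ((1 - 2 * q) / q ^ 2 : ℝ) k =
      ((((1 - 2 * q) / q ^ 2) ^ (-gammaR q) : ℝ) : ℂ) * ((1 / (Real.log (1 / q) : ℂ)) *
        PiR q (Real.log (1 - 2 * q) / Real.log (1 / q))) := by
    rw [vF_ofReal, ← rpow_neg_gammaR hq₀ hq₁,
      tsum_bilateralTerm hq₀ hq₁ (gammaR_pos hq₀ hq₁) (gammaR_lt_one hq₀ hq) hz,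
      log_div_sq_div_log_one_div hq₀ hq, ← PiR_add_nat q _ 2]
    rfl
  rw [hqz, haz, hsum, Ufun, Complex.ofReal_div (vR q * _)]
  linear_combination (qPI (-((1 - 2 * q) / q : ℝ)) q / qPI (-(aR q * (1 - 2 * q) / q ^ 2 : ℝ)) q *
    (1 / (Real.log (1 / q) : ℂ)) * PiR q (Real.log (1 - 2 * q) / Real.log (1 / q))) * hpre

theorem tsum_Tterm_eq_singular_add_regular (hq₀ : 0 < q) (hq : q < 1 / 2) :
    ∑' p : ℕ × ℕ, Tterm (q : ℂ) (p.1 + 1) p.2 =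
      ((1 - 2 * q) ^ (-gammaR q) : ℝ) * PiR q (Real.log (1 - 2 * q) / Real.log (1 / q)) *
        Ufun q + Vfun q := by
  have hqn := norm_ofReal_lt_half hq₀ hq
  have hqn₁ := hqn.trans one_half_lt_one
  have hqc : (q : ℂ) ≠ 0 := Complex.ofReal_ne_zero.mpr hq₀.ne'
  have hz : 0 < (1 - 2 * q) / q ^ 2 := div_pos (by linarith) (by positivity)
  have hpole : ∀ k : ℤ, (((1 - 2 * q) / q ^ 2 : ℝ) : ℂ) + (q : ℂ) ^ k ≠ 0 := fun k => by
    exact_mod_cast (add_pos hz (zpow_pos hq₀ k)).ne'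
  have hconn := qPartialFraction_eq hqn₁ hqc (aF_ne_zero hqn hqc)
    (one_lt_norm_vF hq₀ (hq.trans one_half_lt_one))
    ((norm_vF_mul_le hqn).trans_lt (by norm_num)) (Complex.ofReal_ne_zero.mpr hz.ne')
    (norm_aF_mul_lt_one hq₀ hq) hpole
  have hcancel : qPI (q : ℂ) q / qPI (aF q) q * (qPI (aF q) q / qPI (q : ℂ) q) = 1 := by
    rw [div_mul_div_cancel₀ (qPI_ne_zero hqn₁ (norm_aF_lt hqn)),
      div_self (qPI_ne_zero hqn₁ hqn₁)]
  rw [tsum_Tterm hqn hqc, tsum_contTerm hq₀.ne', hconn, Vfun_eq hq₀.ne',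
    ← bilateralTerm_part_eq_PiR_mul_Ufun hq₀ hq]
  linear_combination (1 / (q : ℂ) ^ 2 * (qPI (-(q * ((1 - 2 * q) / q ^ 2 : ℝ))) q /
    qPI (-(aF q * ((1 - 2 * q) / q ^ 2 : ℝ))) q *
    ∑' k, bilateralTerm (vF q) q ((1 - 2 * q) / q ^ 2 : ℝ) k)) * hcancel

end RealParameter

theorem PA_singular_regular_decomposition_real_general :
    ∃ f : ℂ → ℂ,
      AnalyticOnNhd ℂ f (Metric.ball 0 (1 / 2)) ∧
      (∀ z : ℂ, ‖z‖ < 1 / 2 → ‖z ^ 2‖ < ‖1 - 2 * z‖ →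
        Summable (fun m => ‖PAterm z (m + 1)‖) ∧ f z = PAseries z) ∧
      (∀ z : ℂ, ‖z‖ < 1 / 2 → z ≠ 0 →
        Summable (fun p : ℕ × ℕ => ‖Tterm z (p.1 + 1) p.2‖) ∧
        f z = DF z - z ^ 2 * AF z *
          (qPI (aF z) z * qPI (vF z) z / (qPI z z * qPI (aF z * vF z) z)) *
          ∑' p : ℕ × ℕ, Tterm z (p.1 + 1) p.2) ∧
      ∀ q : ℝ, 0 < q → q < 1 / 2 →
        (∀ w : ℝ, Summable fun k : ℤ => ‖pcoefR q k * Complex.exp (-2 * Real.pi * I * k * w)‖) ∧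
        Summable (fun r => ‖Vterm q r‖) ∧
        ∑' p : ℕ × ℕ, Tterm (q : ℂ) (p.1 + 1) p.2 =
          ((1 - 2 * q) ^ (-gammaR q) : ℝ) * PiR q (Real.log (1 - 2 * q) / Real.log (1 / q)) *
            Ufun q + Vfun q :=
  ⟨PAcont, analyticOnNhd_PAcont,
    fun _ hz h => ⟨summable_norm_PAterm hz h, PAcont_eq_PAseries hz h⟩,
    fun _ hz hz₀ => ⟨summable_norm_Tterm hz hz₀, PAcont_eq_DF_sub hz hz₀⟩,
    fun _ hq₀ hq => ⟨summable_norm_PiR_terms hq₀ (hq.trans one_half_lt_one),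
      summable_norm_Vterm hq₀ hq, tsum_Tterm_eq_singular_add_regular hq₀ hq⟩⟩

/-- For real `q < 1/2` close enough to `1/2`, the analytic continuation of `PA`
satisfies `PA(q) = D(q) - q²A(q)·((a;q)_∞(v;q)_∞/((q;q)_∞(av;q)_∞))·T(q)` and
`T(q) = (1-2q)^{-γ} Π(log(1-2q)/log(1/q)) U(q) + V(q)`. -/
theorem PA_singular_regular_decomposition_real :
    ∃ f : ℂ → ℂ,
      AnalyticOnNhd ℂ f {z : ℂ | z.im = 0 ∧ 0 < z.re ∧ z.re < 1 / 2} ∧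
      (∀ z : ℂ, ‖z‖ < 1 / 10 → f z = PAseries z) ∧
      ∃ ε : ℝ, 0 < ε ∧
        ∀ q : ℝ, 1 / 2 - ε < q → q < 1 / 2 →
          Summable (fun p : ℕ × ℕ => ‖Tterm (q : ℂ) (p.1 + 1) p.2‖) ∧
          Summable (fun k : ℤ => ‖pcoefR q k *
            Complex.exp (-2 * (Real.pi : ℂ) * Complex.I * (k : ℂ) *
              ((Real.log (1 - 2 * q) / Real.log (1 / q) : ℝ) : ℂ))‖) ∧
          Summable (fun r : ℕ => ‖Vterm q r‖) ∧
          f (q : ℂ) =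
            DF (q : ℂ) - (q : ℂ) ^ 2 * AF (q : ℂ) *
              (qPI (aF q) q * qPI (vF q) q /
                (qPI (q : ℂ) q * qPI (aF q * vF q) q)) *
              (∑' p : ℕ × ℕ, Tterm (q : ℂ) (p.1 + 1) p.2) ∧
          (∑' p : ℕ × ℕ, Tterm (q : ℂ) (p.1 + 1) p.2) =
            (((1 - 2 * q) ^ (-(gammaR q)) : ℝ) : ℂ) *
              PiR q (Real.log (1 - 2 * q) / Real.log (1 / q)) * Ufun q +
              Vfun q := by
  obtain ⟨f, hf, hPA, hT, hV⟩ := PA_singular_regular_decomposition_real_general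
  refine ⟨f, hf.mono fun z hz => ?_, fun z hz => ?_, 1 / 2, by norm_num, fun q hq₀ hq => ?_⟩
  · obtain ⟨him, hre₀, hre⟩ := hz
    rwa [mem_ball_zero_iff, ← Complex.abs_re_eq_norm.mpr him, abs_of_pos hre₀]
  · refine (hPA z (by linarith) ?_).2
    have hsub := norm_sub_norm_le 1 (2 * z)
    rw [norm_one, norm_mul, Complex.norm_two] at hsub
    rw [norm_pow]
    nlinarith [norm_nonneg z]
  · rw [sub_self] at hq₀
    obtain ⟨hTs, hTeq⟩ := hT q (norm_ofReal_lt_half hq₀ hq) (Complex.ofReal_ne_zero.mpr hq₀.ne')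
    obtain ⟨hPi, hVs, hVeq⟩ := hV q hq₀ hq
    exact ⟨hTs, hPi _, hVs, hTeq, hVeq⟩
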